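/- arXiv:1902.05882 — 5 statements merged into one kernel-verified Lean document; each statement's English description precedes it below -/
import Mathlib

section
/- For every sufficiently large n there exists a 2-edge-coloured graph G on n vertices with δ(G) ≥ n/2 + log n/(16·log log n) whose vertex set cannot be partitioned into fewer than log n/(32·log log n) vertex-disjoint monochromatic cycles. -/
/-!
STATEMENT 1: For every sufficiently large `n` there exists a 2-edge-coloured graph `G`
on `n` vertices with `δ(G) ≥ n/2 + log n/(16·log log n)` whose vertex set cannot be
partitioned into fewer than `log n/(32·log log n)` vertex-disjoint monochromatic cycles.
-/

namespace Paper

variable {V : Type*}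

/-- `S` is the vertex set of a monochromatic proper cycle of `G` under the colouring `c`. -/
def IsMonoProperCycle {r : ℕ} (G : SimpleGraph V) (c : Sym2 V → Fin r) (S : Set V) : Prop :=
  ∃ (i : Fin r) (v : V) (w : G.Walk v v), w.IsCycle ∧ (∀ e ∈ w.edges, c e = i) ∧
    S = {x | x ∈ w.support}

/-- `S` is a (possibly degenerate) monochromatic cycle: the empty set, a single vertex,
a single edge, or a monochromatic proper cycle. -/
def IsMonoCycle {r : ℕ} (G : SimpleGraph V) (c : Sym2 V → Fin r) (S : Set V) : Prop :=
  S = ∅ ∨ (∃ v, S = {v}) ∨ (∃ u v, G.Adj u v ∧ S = {u, v}) ∨ IsMonoProperCycle G c S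

/-- The vertex set of `G` can be partitioned into at most `k` vertex-disjoint
monochromatic cycles. -/
def MonoCyclePartition {r : ℕ} (G : SimpleGraph V) (c : Sym2 V → Fin r) (k : ℕ) : Prop :=
  ∃ f : Fin k → Set V,
    (∀ i j : Fin k, i ≠ j → Disjoint (f i) (f j)) ∧
    (⋃ i, f i) = Set.univ ∧
    ∀ i, IsMonoCycle G c (f i)

/-!
Split the vertices into a set `A` and a slightly smaller complement, join the two sides completely
in colour `0`, and put a graph of minimum degree `2M + 1` and girth greater than `4M` inside `A` in
colour `1`; such a graph exists by the Erdős–Sachs argument, which needs only about `(8M)^(4M)`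
vertices. A cycle of colour `0` alternates between the sides, so it contains as many vertices of
`A` as of `Aᶜ`, whereas a cycle of colour `1` contains more than `4M` vertices of `A` and no others.
Since `A` has at least `2M` and at most `2M + 1` vertices more than `Aᶜ`, fewer than `M` cycles that
are degenerate or of colour `0` cannot make up this excess, while a cycle of colour `1` overshoots
it by more than the remaining cycles can compensate.
-/

open SimpleGraph Finset

section Girth

variable {G H : SimpleGraph V} {u v w : V}

lemma edist_deleteEdges_snd_add_one_le_length {c : G.Walk u u} (hc : c.IsCycle) :
    (G.deleteEdges {s(u, c.snd)}).edist u c.snd + 1 ≤ c.length := by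
  rcases c with _ | ⟨h, p⟩
  · simp at hc
  · rw [Walk.cons_isCycle_iff] at hc
    have hp := edist_le (p.toDeleteEdge _ hc.2)
    rw [Walk.length_transfer, edist_comm] at hp
    simpa using add_le_add_left hp 1

lemma edist_deleteEdges_add_one_le_length {c : G.Walk v v} (hc : c.IsCycle)
    (he : s(u, w) ∈ c.edges) : (G.deleteEdges {s(u, w)}).edist u w + 1 ≤ c.length := by
  classical
  have hu : u ∈ c.support := c.fst_mem_support_of_mem_edges he
  have hcu := hc.rotate hu
  have hw : w ∈ (c.rotate u hu).toSubgraph.neighborSet u := by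
    simpa [← Walk.adj_toSubgraph_iff_mem_edges] using he
  rw [hcu.neighborSet_toSubgraph_endpoint] at hw
  rw [← c.length_rotate u hu]
  rcases hw with rfl | rfl
  · exact edist_deleteEdges_snd_add_one_le_length hcu
  · simpa using edist_deleteEdges_snd_add_one_le_length hcu.reverse

lemma min_egirth_le_egirth_sup_edge :
    min H.egirth (H.edist u w + 1) ≤ (H ⊔ edge u w).egirth := by
  refine le_egirth.2 fun v c hc => ?_
  by_cases he : s(u, w) ∈ c.edges
  · have hle : (H ⊔ edge u w).deleteEdges {s(u, w)} ≤ H := by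
      intro a b
      simp only [deleteEdges_adj, sup_adj, adj_edge, Set.mem_singleton_iff]
      tauto
    calc min H.egirth (H.edist u w + 1) ≤ H.edist u w + 1 := min_le_right _ _
      _ ≤ ((H ⊔ edge u w).deleteEdges {s(u, w)}).edist u w + 1 := by gcongr
      _ ≤ c.length := edist_deleteEdges_add_one_le_length hc he
  · have hmem : ∀ e ∈ c.edges, e ∈ H.edgeSet := fun e hec =>
      (edgeSet_sup H (edge u w) ▸ c.edges_subset_edgeSet hec).resolve_right fun h =>
        he (edgeSet_edge_subset h ▸ hec)
    calc min H.egirth (H.edist u w + 1) ≤ H.egirth := min_le_left _ _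
      _ ≤ (c.transfer H hmem).length := egirth_le_length (hc.transfer hmem)
      _ = c.length := by rw [Walk.length_transfer]

end Girth

section ErdosSachs

variable {H : SimpleGraph V} {u w : V} {d : ℕ}

lemma ball_add_one_subset (u : V) (r : ℕ∞) :
    H.ball u (r + 1) ⊆ insert u (⋃ x ∈ H.neighborSet u, H.ball x r) := by
  intro w hw
  rw [mem_ball, edist_comm] at hw
  obtain ⟨p, hp⟩ := exists_walk_of_edist_ne_top hw.ne_top
  rcases p with _ | ⟨h, q⟩
  · exact Set.mem_insert _ _
  · refine Set.mem_insert_of_mem _ (Set.mem_biUnion h ?_)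
    rw [← hp, Walk.length_cons, Nat.cast_add, Nat.cast_one] at hw
    exact mem_ball.2 (edist_comm.trans_le (edist_le q) |>.trans_lt (lt_of_add_lt_add_right hw))

lemma ncard_ball_le [Finite V] (hd : ∀ v, (H.neighborSet v).ncard ≤ d) (u : V) (j : ℕ) :
    (H.ball u (j + 1)).ncard ≤ (d + 1) ^ j := by
  induction j generalizing u with
  | zero => simp
  | succ j ih =>
    let N := (Set.toFinite (H.neighborSet u)).toFinset
    have hN : #N ≤ d := Set.ncard_eq_toFinset_card (H.neighborSet u) ▸ hd u
    have hsub : H.ball u ((j + 1 : ℕ) + 1) ⊆ insert u (⋃ x ∈ N, H.ball x (j + 1)) := by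
      simpa [N] using ball_add_one_subset (H := H) u (j + 1)
    calc (H.ball u ((j + 1 : ℕ) + 1)).ncard
        ≤ (insert u (⋃ x ∈ N, H.ball x (j + 1))).ncard := Set.ncard_le_ncard hsub
      _ ≤ (⋃ x ∈ N, H.ball x (j + 1)).ncard + 1 := Set.ncard_insert_le _ _
      _ ≤ ∑ x ∈ N, (H.ball x (j + 1)).ncard + 1 := by
        gcongr
        exact N.set_ncard_biUnion_le _
      _ ≤ #N * (d + 1) ^ j + (d + 1) ^ j := by
        gcongr
        · exact Finset.sum_le_card_nsmul _ _ _ fun x _ => ih x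
        · exact Nat.one_le_pow _ _ d.succ_pos
      _ ≤ d * (d + 1) ^ j + (d + 1) ^ j := by gcongr
      _ = (d + 1) ^ (j + 1) := by ring

lemma ncard_neighborSet_sup_edge [Finite V] [DecidableEq V] (huw : u ≠ w) (hadj : ¬ H.Adj u w)
    (v : V) : ((H ⊔ edge u w).neighborSet v).ncard =
      (H.neighborSet v).ncard + (if v = u then 1 else 0) + if v = w then 1 else 0 := by
  have hadj' : ¬ H.Adj w u := fun h => hadj h.symm
  by_cases hu : v = u
  · have hv : (H ⊔ edge u w).neighborSet v = insert w (H.neighborSet v) := by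
      ext x; simp only [mem_neighborSet, sup_adj, edge_adj, Set.mem_insert_iff]; grind
    rw [hv, Set.ncard_insert_of_notMem (by simpa [hu] using hadj)]
    simp [hu, huw]
  by_cases hw : v = w
  · have hv : (H ⊔ edge u w).neighborSet v = insert u (H.neighborSet v) := by
      ext x; simp only [mem_neighborSet, sup_adj, edge_adj, Set.mem_insert_iff]; grind
    rw [hv, Set.ncard_insert_of_notMem (by simpa [hw] using hadj')]
    simp [hw, huw.symm]
  have hv : (H ⊔ edge u w).neighborSet v = H.neighborSet v := by
    ext x; simp only [mem_neighborSet, sup_adj, edge_adj]; grind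
  simp [hv, hu, hw]

variable [Fintype V] {D g : ℕ}

/-- The graphs among which the Erdős–Sachs argument picks a maximal one: degrees at most `4 * D`,
girth at least `g`, and a degree sum controlled by the degrees truncated at `D`. The last
condition survives adding an edge at a vertex of degree less than `D`, and it forces at least
half of the vertices to have degree less than `4 * D`. -/
structure IsErdosSachs (D g : ℕ) (H : SimpleGraph V) : Prop where
  le_egirth : (g : ℕ∞) ≤ H.egirth
  ncard_neighborSet_le : ∀ v, (H.neighborSet v).ncard ≤ 4 * D
  sum_ncard_neighborSet_le :
    ∑ v, (H.neighborSet v).ncard ≤ 2 * ∑ v, min (H.neighborSet v).ncard D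

lemma isErdosSachs_bot : IsErdosSachs D g (⊥ : SimpleGraph V) where
  le_egirth := by simp
  ncard_neighborSet_le := by simp
  sum_ncard_neighborSet_le := by simp

lemma IsErdosSachs.sup_edge (hH : IsErdosSachs D g H) (hu : (H.neighborSet u).ncard < D)
    (hw : (H.neighborSet w).ncard < 4 * D) (huw : u ≠ w) (hadj : ¬ H.Adj u w)
    (hg : (g : ℕ∞) ≤ H.edist u w + 1) : IsErdosSachs D g (H ⊔ edge u w) := by
  classical
  have hdeg := ncard_neighborSet_sup_edge huw hadj
  refine ⟨(le_min hH.le_egirth hg).trans min_egirth_le_egirth_sup_edge, fun v => ?_, ?_⟩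
  · have hv := hH.ncard_neighborSet_le v
    rw [hdeg]
    split_ifs <;> subst_vars <;> omega
  · have hsum : ∑ v, ((H ⊔ edge u w).neighborSet v).ncard =
        ∑ v, (H.neighborSet v).ncard + 2 := by
      simp only [hdeg, Finset.sum_add_distrib]
      simp
    have hmin : ∑ v, min (H.neighborSet v).ncard D <
        ∑ v, min ((H ⊔ edge u w).neighborSet v).ncard D := by
      refine Finset.sum_lt_sum (fun v _ => ?_) ⟨u, Finset.mem_univ u, ?_⟩
      · rw [hdeg]
        omega
      · rw [hdeg, if_pos rfl]
        omega
    have := hH.sum_ncard_neighborSet_le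
    omega

lemma IsErdosSachs.two_mul_card_filter_le (hH : IsErdosSachs D g H) (hD : 0 < D) :
    2 * #{v | 4 * D ≤ (H.neighborSet v).ncard} ≤ Fintype.card V := by
  have hmin : ∑ v, min (H.neighborSet v).ncard D ≤ Fintype.card V * D :=
    Finset.sum_le_card_nsmul _ _ _ fun v _ => min_le_right _ _
  have hfilter : #{v | 4 * D ≤ (H.neighborSet v).ncard} * (4 * D) ≤
      ∑ v, (H.neighborSet v).ncard :=
    (Finset.card_nsmul_le_sum _ _ _ fun v hv => (Finset.mem_filter.1 hv).2).trans
      (Finset.sum_le_sum_of_subset (Finset.filter_subset _ _))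
  have := hH.sum_ncard_neighborSet_le
  refine Nat.le_of_mul_le_mul_right (c := 2 * D) ?_ (by omega)
  linarith

lemma IsErdosSachs.exists_notMem_ball (hH : IsErdosSachs D g H) (hD : 0 < D) {j : ℕ}
    (hj : 2 * (4 * D + 1) ^ j < Fintype.card V) (u : V) :
    ∃ w ∉ H.ball u (j + 1), (H.neighborSet w).ncard < 4 * D := by
  classical
  by_contra! hcon
  have hcover : Finset.univ ⊆
      (H.ball u (j + 1)).toFinset ∪
        ({v | 4 * D ≤ (H.neighborSet v).ncard} : Finset V) := fun w _ => by
    simpa [or_iff_not_imp_left] using hcon w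
  have hcard := (Finset.card_le_card hcover).trans (Finset.card_union_le _ _)
  rw [← Set.ncard_eq_toFinset_card', Finset.card_univ] at hcard
  have hball := ncard_ball_le hH.ncard_neighborSet_le u j
  have hlarge := hH.two_mul_card_filter_le hD
  omega

theorem exists_le_egirth_of_pow_lt_card (hg : 2 * (4 * D + 1) ^ (g + 1) < Fintype.card V) :
    ∃ H : SimpleGraph V, ((g + 3 : ℕ) : ℕ∞) ≤ H.egirth ∧ ∀ v, D ≤ (H.neighborSet v).ncard := by
  have hfinite : {H : SimpleGraph V | IsErdosSachs D (g + 3) H}.Finite := Set.toFinite _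
  obtain ⟨H, hH, hmax⟩ := hfinite.exists_maximal ⟨⊥, isErdosSachs_bot⟩
  refine ⟨H, hH.le_egirth, fun u => ?_⟩
  by_contra! hu
  obtain ⟨w, hball, hw⟩ := hH.exists_notMem_ball (by omega) hg u
  have hfar : ((g + 2 : ℕ) : ℕ∞) ≤ H.edist u w := by
    rw [mem_ball, not_lt, edist_comm] at hball
    exact_mod_cast hball
  have huw : u ≠ w := by
    rintro rfl
    simp at hfar
  have hadj : ¬ H.Adj u w := fun h => by
    rw [edist_eq_one_iff_adj.2 h] at hfar
    norm_cast at hfar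
  have hgirth : ((g + 3 : ℕ) : ℕ∞) ≤ H.edist u w + 1 := by
    exact_mod_cast add_le_add_left hfar 1
  have hle := hmax (hH.sup_edge hu hw huw hadj hgirth) le_sup_left
  exact hadj (hle (by simp [edge_adj, huw]))

end ErdosSachs

section Imbalance

variable {A S : Set V}

/-- The excess of the vertices of `S` inside `A` over those outside `A`. Both parts have to be
finite for this to be meaningful. -/
noncomputable def imbalance (A S : Set V) : ℤ := (S ∩ A).ncard - (S \ A).ncard

lemma imbalance_of_subset (h : S ⊆ A) : imbalance A S = S.ncard := by
  simp [imbalance, Set.inter_eq_left.2 h, Set.sdiff_eq_empty.2 h]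

lemma imbalance_univ : imbalance A Set.univ = A.ncard - Aᶜ.ncard := by
  simp [imbalance, Set.compl_eq_univ_sdiff]

lemma abs_imbalance_le_ncard (hS : S.Finite) : |imbalance A S| ≤ S.ncard := by
  have := Set.ncard_inter_add_ncard_sdiff_eq_ncard S A hS
  rw [imbalance, abs_le]
  omega

lemma imbalance_iUnion [Finite V] {ι : Type*} [Fintype ι] {f : ι → Set V}
    (hf : Pairwise (Function.onFun Disjoint f)) :
    imbalance A (⋃ i, f i) = ∑ i, imbalance A (f i) := by
  simp only [imbalance, Set.iUnion_inter, Set.iUnion_sdiff, Finset.sum_sub_distrib]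
  rw [Set.ncard_iUnion_of_finite (fun i => Set.toFinite _)
      fun i j hij => (hf hij).mono Set.inter_subset_left Set.inter_subset_left,
    Set.ncard_iUnion_of_finite (fun i => Set.toFinite _)
      fun i j hij => (hf hij).mono Set.sdiff_subset Set.sdiff_subset,
    finsum_eq_sum_of_fintype, finsum_eq_sum_of_fintype]
  push_cast
  rfl

lemma sum_le_or_lt_sum_add {ι : Type*} [Fintype ι] {x : ι → ℤ} {b g : ℕ}
    (hx : ∀ i, |x i| ≤ b ∨ g < x i) :
    ∑ i, x i ≤ Fintype.card ι * b ∨ g < ∑ i, x i + Fintype.card ι * b := by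
  have hnonneg : ∀ i, 0 ≤ x i + b := fun i => by
    have := hx i
    rw [abs_le] at this
    omega
  by_cases! hlong : ∃ i, g < x i
  · obtain ⟨i, hi⟩ := hlong
    have hsum : x i + b ≤ ∑ i, (x i + b) :=
      Finset.single_le_sum (f := fun i => x i + (b : ℤ)) (fun i _ => hnonneg i) (mem_univ i)
    right
    simp only [Finset.sum_add_distrib, Finset.sum_const, card_univ, nsmul_eq_mul] at hsum
    omega
  · left
    simpa using Finset.sum_le_card_nsmul univ x b fun i _ =>
      (le_abs_self _).trans ((hx i).resolve_right (hlong i).not_gt)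

end Imbalance

section Cycles

variable {G : SimpleGraph V} {A S : Set V} {v : V} {w : G.Walk v v} {g k : ℕ}

lemma setOf_mem_support_eq_coe_toFinset_tail [DecidableEq V] (hw : w.IsCycle) :
    {x | x ∈ w.support} = w.support.tail.toFinset := by
  ext x
  have hv := w.end_mem_tail_support hw.not_nil
  simp only [w.mem_support_iff, List.coe_toFinset, Set.mem_ofPred_eq, or_iff_right_iff_imp]
  rintro rfl
  exact hv

lemma ncard_setOf_mem_support_inter (hw : w.IsCycle) (B : Set V) [DecidablePred (· ∈ B)] :
    ({x | x ∈ w.support} ∩ B).ncard = w.support.tail.countP (· ∈ B) := by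
  classical
  have hB : {x | x ∈ w.support} ∩ B = (w.support.tail.filter (· ∈ B)).toFinset := by
    rw [setOf_mem_support_eq_coe_toFinset_tail hw]
    ext x
    simp
  rw [hB, Set.ncard_coe_finset, List.toFinset_card_of_nodup (hw.support_nodup.filter _),
    List.countP_eq_length_filter]

lemma ncard_setOf_mem_support (hw : w.IsCycle) : {x | x ∈ w.support}.ncard = w.length := by
  simpa using ncard_setOf_mem_support_inter hw Set.univ

lemma imbalance_setOf_mem_support_eq_zero (hw : w.IsCycle)
    (halt : ∀ d ∈ w.darts, d.fst ∉ A ↔ d.snd ∈ A) : imbalance A {x | x ∈ w.support} = 0 := by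
  classical
  have hcount : w.support.tail.countP (· ∈ Aᶜ) = w.support.tail.countP (· ∈ A) :=
    calc w.support.tail.countP (· ∈ Aᶜ)
        = w.support.dropLast.countP (· ∈ Aᶜ) := w.tail_support_perm_dropLast_support.countP_eq _
      _ = w.darts.countP (·.fst ∈ Aᶜ) := by rw [← Walk.map_fst_darts, List.countP_map]; rfl
      _ = w.darts.countP (·.snd ∈ A) := List.countP_congr fun d hd => by simpa using halt d hd
      _ = w.support.tail.countP (· ∈ A) := by rw [← Walk.map_snd_darts, List.countP_map]; rfl
  rw [imbalance, Set.sdiff_eq, ncard_setOf_mem_support_inter hw,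
    ncard_setOf_mem_support_inter hw, hcount, sub_self]

lemma egirth_induce_le_length (hw : w.IsCycle) (hA : ∀ x ∈ w.support, x ∈ A) :
    (G.induce A).egirth ≤ w.length := by
  have hmap := w.map_induce hA
  have hcyc : (w.induce A hA).IsCycle := Walk.IsCycle.of_map (hmap ▸ hw)
  have hlength : (w.induce A hA).length = w.length :=
    (Walk.length_map _ _).symm.trans (congrArg Walk.length hmap)
  exact hlength ▸ egirth_le_length hcyc

open Classical in
/-- The edge colouring giving colour `1` to the edges inside `A` and colour `0` to all others. -/
noncomputable def insideColour (A : Set V) (e : Sym2 V) : Fin 2 :=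
  if ∀ x ∈ e, x ∈ A then 1 else 0

lemma insideColour_eq_one_iff {e : Sym2 V} : insideColour A e = 1 ↔ ∀ x ∈ e, x ∈ A := by
  simp [insideColour]

lemma imbalance_of_isMonoProperCycle (hindep : G.IsIndepSet Aᶜ)
    (hgirth : (g : ℕ∞) < (G.induce A).egirth) (hS : IsMonoProperCycle G (insideColour A) S) :
    imbalance A S = 0 ∨ g < imbalance A S := by
  obtain ⟨i, v, w, hw, hc, rfl⟩ := hS
  by_cases hi : i = 1
  · right
    have hA : ∀ x ∈ w.support, x ∈ A := fun x hx => by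
      obtain ⟨e, he, hxe⟩ := (w.mem_support_iff_exists_mem_edges_of_not_nil hw.not_nil).1 hx
      exact insideColour_eq_one_iff.1 ((hc e he).trans hi) x hxe
    rw [imbalance_of_subset (S := {x | x ∈ w.support}) hA, ncard_setOf_mem_support hw]
    exact_mod_cast hgirth.trans_le (egirth_induce_le_length hw hA)
  · left
    refine imbalance_setOf_mem_support_eq_zero hw fun d hd => ?_
    have hnot : ¬ (d.fst ∈ A ∧ d.snd ∈ A) := by
      have hd := hc d.edge (List.mem_map_of_mem hd)
      have := insideColour_eq_one_iff.not.1 (hd ▸ hi)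
      simpa [Dart.edge] using this
    have hor : d.fst ∈ A ∨ d.snd ∈ A := by
      by_contra! h
      exact hindep h.1 h.2 d.adj.ne d.adj
    tauto

lemma imbalance_of_isMonoCycle (hindep : G.IsIndepSet Aᶜ)
    (hgirth : (g : ℕ∞) < (G.induce A).egirth) (hS : IsMonoCycle G (insideColour A) S) :
    |imbalance A S| ≤ (2 : ℕ) ∨ g < imbalance A S := by
  have hsmall : S.Finite → S.ncard ≤ 2 → |imbalance A S| ≤ (2 : ℕ) := fun hfin hcard =>
    (abs_imbalance_le_ncard hfin).trans (by exact_mod_cast hcard)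
  rcases hS with rfl | ⟨u, rfl⟩ | ⟨u, v, -, rfl⟩ | hS
  · exact .inl (hsmall Set.finite_empty (by simp))
  · exact .inl (hsmall (Set.finite_singleton u) (by simp))
  · exact .inl (hsmall (Set.toFinite _) ((Set.ncard_insert_le u {v}).trans (by simp)))
  · exact (imbalance_of_isMonoProperCycle hindep hgirth hS).imp_left fun h => by simp [h]

theorem not_monoCyclePartition_insideColour [Finite V] (hindep : G.IsIndepSet Aᶜ)
    (hgirth : (g : ℕ∞) < (G.induce A).egirth) (hlow : Aᶜ.ncard + 2 * k < A.ncard)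
    (hup : A.ncard + 2 * k ≤ Aᶜ.ncard + g) : ¬ MonoCyclePartition G (insideColour A) k := by
  rintro ⟨f, hdisj, hcover, hf⟩
  have htotal : ∑ i, imbalance A (f i) = A.ncard - Aᶜ.ncard := by
    rw [← imbalance_iUnion hdisj, hcover, imbalance_univ]
  have := sum_le_or_lt_sum_add fun i => imbalance_of_isMonoCycle hindep hgirth (hf i)
  rw [htotal, Fintype.card_fin] at this
  omega

end Cycles

section JoinCompl

variable {A : Set V} {H : SimpleGraph A} {v : V}

/-- The graph `H` on `A` together with all edges between `A` and its complement. -/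
def joinCompl (H : SimpleGraph A) : SimpleGraph V :=
  H.spanningCoe ⊔ (⊤ : SimpleGraph V).between A Aᶜ

lemma induce_joinCompl : (joinCompl H).induce A = H := by
  ext a b
  simp [joinCompl, between_adj]

lemma isIndepSet_joinCompl : (joinCompl H).IsIndepSet Aᶜ := by
  intro a ha b hb _
  simp_all [joinCompl, between_adj]

lemma neighborSet_joinCompl_of_mem (hv : v ∈ A) :
    (joinCompl H).neighborSet v = Subtype.val '' H.neighborSet ⟨v, hv⟩ ∪ Aᶜ := by
  ext x
  by_cases hx : x ∈ A
  · simp [joinCompl, between_adj, hv, hx]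
  · simpa [joinCompl, between_adj, hv, hx] using fun h : v = x => hx (h ▸ hv)

lemma neighborSet_joinCompl_of_notMem (hv : v ∉ A) : (joinCompl H).neighborSet v = A := by
  ext x
  simpa [joinCompl, between_adj, hv] using fun (hx : x ∈ A) (h : v = x) => hv (h ▸ hx)

lemma ncard_neighborSet_joinCompl_of_mem [Finite V] (hv : v ∈ A) :
    ((joinCompl H).neighborSet v).ncard = (H.neighborSet ⟨v, hv⟩).ncard + Aᶜ.ncard := by
  have hdisj : Disjoint (Subtype.val '' H.neighborSet ⟨v, hv⟩) Aᶜ :=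
    Set.disjoint_compl_right_iff_subset.2 (Subtype.coe_image_subset _ _)
  rw [neighborSet_joinCompl_of_mem hv, Set.ncard_union_eq hdisj,
    Set.ncard_image_of_injective _ Subtype.val_injective]

end JoinCompl

theorem exists_forall_not_monoCyclePartition [Finite V] {M : ℕ}
    (hM : 4 * (8 * M + 5) ^ (4 * M + 1) < Nat.card V) :
    ∃ (G : SimpleGraph V) (c : Sym2 V → Fin 2),
      (∀ v, Nat.card V + 2 * M ≤ 2 * (G.neighborSet v).ncard) ∧
        ∀ k < M, ¬ MonoCyclePartition G c k := by
  have hpow : 8 * M + 5 ≤ (8 * M + 5) ^ (4 * M + 1) := Nat.le_self_pow (by omega) _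
  -- This size makes `A` larger than its complement by `2 * M` or `2 * M + 1`, depending on parity.
  obtain ⟨A, -, hA⟩ := Set.exists_subset_card_eq (s := (Set.univ : Set V))
    (n := (Nat.card V + 2 * M + 1) / 2) (by rw [Set.ncard_univ]; omega)
  have hcompl := Set.ncard_add_ncard_compl A
  obtain ⟨H, hgirth, hdeg⟩ : ∃ H : SimpleGraph A, ((4 * M + 3 : ℕ) : ℕ∞) ≤ H.egirth ∧
      ∀ v, 2 * M + 1 ≤ (H.neighborSet v).ncard := by
    have := Fintype.ofFinite A
    refine exists_le_egirth_of_pow_lt_card ?_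
    rw [← Nat.card_eq_fintype_card, Nat.card_coe_set_eq, hA,
      show 4 * (2 * M + 1) + 1 = 8 * M + 5 by ring]
    omega
  refine ⟨joinCompl H, insideColour A, fun v => ?_, fun k hk => ?_⟩
  · by_cases hv : v ∈ A
    · rw [ncard_neighborSet_joinCompl_of_mem hv]
      have := hdeg ⟨v, hv⟩
      omega
    · rw [neighborSet_joinCompl_of_notMem hv]
      omega
  · refine not_monoCyclePartition_insideColour (g := 4 * M + 2) isIndepSet_joinCompl ?_
      (by omega) (by omega)
    rw [induce_joinCompl]
    exact lt_of_lt_of_le (by norm_cast; omega) hgirth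

section Numerics

open Filter Real

lemma eventually_log_le_mul {ε : ℝ} (hε : 0 < ε) : ∀ᶠ x : ℝ in atTop, log x ≤ ε * x := by
  filter_upwards [isLittleO_log_id_atTop.bound hε, eventually_ge_atTop 0] with x hx h0
  simpa [abs_of_nonneg h0] using (le_abs_self _).trans hx

lemma eventually_four_mul_pow_lt_exp : ∀ᶠ x : ℝ in atTop,
    (4 * (8 * ⌈x / (16 * log x)⌉₊ + 5) ^ (4 * ⌈x / (16 * log x)⌉₊ + 1) : ℝ) < exp x := by
  filter_upwards [eventually_log_le_mul (show (0 : ℝ) < 1 / 20 by norm_num),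
    tendsto_log_atTop.eventually_ge_atTop 1, eventually_ge_atTop 26] with x hlog hone hx
  have hceil : (⌈x / (16 * log x)⌉₊ : ℝ) ≤ x / (16 * log x) + 1 :=
    (Nat.ceil_lt_add_one (by positivity)).le
  set M := ⌈x / (16 * log x)⌉₊
  have hbase : 8 * (M : ℝ) + 5 ≤ x := by
    have : x / (16 * log x) ≤ x / 16 := by gcongr; linarith
    linarith
  have hexponent : log x * (4 * M + 1) ≤ x / 2 :=
    calc log x * (4 * M + 1) ≤ log x * (4 * (x / (16 * log x) + 1) + 1) := by gcongr
      _ = x / 4 + 5 * log x := by field_simp; ring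
      _ ≤ x / 2 := by linarith
  have hfour : 4 < exp (x / 2) := by linarith [add_one_le_exp (x / 2)]
  calc 4 * (8 * M + 5 : ℝ) ^ (4 * M + 1) ≤ 4 * x ^ (4 * M + 1) := by gcongr
    _ = 4 * exp (log x * (4 * M + 1)) := by
      rw [← rpow_natCast, rpow_def_of_pos (by linarith)]
      push_cast
      rfl
    _ ≤ 4 * exp (x / 2) := by gcongr
    _ < exp (x / 2) * exp (x / 2) := by gcongr
    _ = exp x := by rw [← exp_add, add_halves]

lemma eventually_four_mul_pow_lt_natCast : ∀ᶠ n : ℕ in atTop,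
    4 * (8 * ⌈log n / (16 * log (log n))⌉₊ + 5) ^ (4 * ⌈log n / (16 * log (log n))⌉₊ + 1) < n := by
  have hlog : Tendsto (fun n : ℕ => log n) atTop atTop :=
    tendsto_log_atTop.comp tendsto_natCast_atTop_atTop
  filter_upwards [hlog.eventually eventually_four_mul_pow_lt_exp, eventually_gt_atTop 0]
    with n hn hpos
  rw [exp_log (by exact_mod_cast hpos)] at hn
  exact_mod_cast hn

end Numerics

theorem min_degree_lower_bound_construction :
    ∃ n₀ : ℕ, ∀ n : ℕ, n₀ ≤ n →
      ∃ (G : SimpleGraph (Fin n)) (c : Sym2 (Fin n) → Fin 2),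
        (∀ v : Fin n,
          (n : ℝ) / 2 + Real.log n / (16 * Real.log (Real.log n))
            ≤ ((G.neighborSet v).ncard : ℝ)) ∧
        ∀ k : ℕ, (k : ℝ) < Real.log n / (32 * Real.log (Real.log n)) →
          ¬ MonoCyclePartition G c k := by
  obtain ⟨n₀, hn₀⟩ := Filter.eventually_atTop.1 eventually_four_mul_pow_lt_natCast
  refine ⟨n₀, fun n hn => ?_⟩
  obtain ⟨G, c, hdeg, hpart⟩ :=
    exists_forall_not_monoCyclePartition (V := Fin n) ((hn₀ n hn).trans_eq (Nat.card_fin n).symm)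
  have hceil := Nat.le_ceil (Real.log n / (16 * Real.log (Real.log n)))
  refine ⟨G, c, fun v => ?_, fun k hk => hpart k ?_⟩
  · have hv : (n : ℝ) + 2 * ⌈Real.log n / (16 * Real.log (Real.log n))⌉₊ ≤
        2 * (G.neighborSet v).ncard := by
      exact_mod_cast Nat.card_fin n ▸ hdeg v
    linarith
  · have hhalf : Real.log n / (32 * Real.log (Real.log n)) =
        Real.log n / (16 * Real.log (Real.log n)) / 2 := by ring
    have hkM : (k : ℝ) < ⌈Real.log n / (16 * Real.log (Real.log n))⌉₊ := by
      linarith [k.cast_nonneg (α := ℝ)]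
    exact_mod_cast hkM

end Paper
end

section
/- Every (μ, ν)-robustly 2-matchable graph H with μ ≤ ν < 1/1000 contains a perfect 2-matching. -/
/-!
STATEMENT 5: Every `(μ, ν)`-robustly 2-matchable graph `H` with `μ ≤ ν < 1/1000`
contains a perfect 2-matching.
-/

namespace Paper

variable {V : Type*}

/-- The number of edges of `H` with both endpoints in `S`. -/
noncomputable def edgesIn (H : SimpleGraph V) (S : Set V) : ℕ :=
  {e : Sym2 V | e ∈ H.edgeSet ∧ ∀ x ∈ e, x ∈ S}.ncard

/-- `H` is `(μ,ν)`-robustly 2-matchable of type 1. -/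
def RobMat1 (H : SimpleGraph V) (μ ν : ℝ) : Prop :=
  (∀ v : V, (1 / 2 - μ) * (Nat.card V : ℝ) ≤ ((H.neighborSet v).ncard : ℝ)) ∧
  ∀ S : Set V, (1 / 2 - ν) * (Nat.card V : ℝ) ≤ (S.ncard : ℝ) →
    ν * (Nat.card V : ℝ) ^ 2 ≤ (edgesIn H S : ℝ)

/-- `H` is `(μ,ν)`-robustly 2-matchable of type 2, witnessed by the bipartition `{A,B}`. -/
def RobMat2With (H : SimpleGraph V) (μ : ℝ) (A B : Set V) : Prop :=
  A ∪ B = Set.univ ∧ Disjoint A B ∧ A.ncard = B.ncard ∧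
  (∀ u v : V, H.Adj u v → (u ∈ A ∧ v ∈ B) ∨ (u ∈ B ∧ v ∈ A)) ∧
  (∀ v : V, (1 / 32 - μ) * (Nat.card V : ℝ) ≤ ((H.neighborSet v).ncard : ℝ)) ∧
  ({v : V | ((H.neighborSet v).ncard : ℝ) < (1 / 3 - μ) * (Nat.card V : ℝ)}.ncard : ℝ)
    ≤ (1 / 64 + μ) * (Nat.card V : ℝ)

/-- `H` is `(μ,ν)`-robustly 2-matchable of type 2. -/
def RobMat2 (H : SimpleGraph V) (μ : ℝ) : Prop := ∃ A B : Set V, RobMat2With H μ A B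

/-- `H` is `(μ,ν)`-robustly 2-matchable. -/
def RobMat (H : SimpleGraph V) (μ ν : ℝ) : Prop := RobMat1 H μ ν ∨ RobMat2 H μ

/-- `ω` is a perfect `b`-matching of `H`: a nonnegative integer weight function on the
edges such that the weights at each vertex `v` sum to `b v`. -/
def IsPerfectBMatching [Fintype V] (H : SimpleGraph V) (b : V → ℕ) (ω : Sym2 V → ℕ) :
    Prop :=
  (∀ e : Sym2 V, e ∉ H.edgeSet → ω e = 0) ∧ ∀ v : V, (∑ w : V, ω s(v, w)) = b v

/-!
A perfect 2-matching exists as soon as there is a permutation `σ` of the vertices with `v` adjacent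
to `σ v` for all `v`: weigh each edge by the number of `v` with `s(v, σ v)` equal to it. By Hall's
theorem such a `σ` exists if `|S| ≤ |N(S)|` for every vertex set `S`.

*Type 1.* The neighbours of `S \ N(S)` lie in `N(S) \ S`, so a violation of Hall's condition by `S`
passes to the independent set `S \ N(S)`. If `S` is independent and `|N(S)| < |S|`, the minimum
degree makes `S` large enough that it must span `νn²` edges, whence `ν ≤ 0`. Then `S` and `N(S)` are
disjoint, one with at least `n/2` vertices and the other with more, which is impossible.

*Type 2.* If `S ⊆ A` violates Hall's condition then so does `B \ N(S)`, whose neighbourhood lies in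
`A \ S`; hence `|N(S)| + |N(B \ N(S))| < |A| = n/2`. But a violating set is larger than the minimum
degree, so it cannot consist of the few vertices of low degree, and its neighbourhood has at least
`(1/3 - μ)n` elements.
-/

/-- The neighbourhood `N(S)` of a vertex set `S`: all vertices with a neighbour in `S`. It may
meet `S`. -/
def neighborhood (H : SimpleGraph V) (S : Set V) : Set V := ⋃ v ∈ S, H.neighborSet v

/-- Hall's condition for `H`, required of all vertex sets rather than of one side of a bipartition.
For finite `H` it says that the vertices can be permuted along edges. The cardinalities are
`Set.ncard`, so the notion is only meaningful for finite `V`. -/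
def SatisfiesHall (H : SimpleGraph V) : Prop := ∀ S : Set V, S.ncard ≤ (neighborhood H S).ncard

section Neighborhood

variable {H : SimpleGraph V} {A B S T : Set V} {v w : V}

theorem mem_neighborhood : w ∈ neighborhood H S ↔ ∃ v ∈ S, H.Adj v w := by
  simp only [neighborhood, Set.mem_iUnion₂, SimpleGraph.mem_neighborSet, exists_prop]

theorem neighborhood_union : neighborhood H (S ∪ T) = neighborhood H S ∪ neighborhood H T :=
  Set.biUnion_union S T H.neighborSet

theorem ncard_neighborSet_le_ncard_neighborhood [Finite V] (hv : v ∈ S) :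
    (H.neighborSet v).ncard ≤ (neighborhood H S).ncard :=
  Set.ncard_le_ncard (Set.subset_biUnion_of_mem (u := H.neighborSet) hv)

theorem disjoint_neighborhood_iff_isIndepSet :
    Disjoint S (neighborhood H S) ↔ H.IsIndepSet S := by
  simp only [Set.disjoint_left, mem_neighborhood]
  exact ⟨fun h v hv w hw _ hvw => h hw ⟨v, hv, hvw⟩,
    fun h w hw ⟨v, hv, hvw⟩ => h hv hw hvw.ne hvw⟩

theorem neighborhood_sdiff_neighborhood_subset_compl :
    neighborhood H (T \ neighborhood H S) ⊆ Sᶜ := by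
  intro w hw hwS
  obtain ⟨v, hv, hvw⟩ := mem_neighborhood.1 hw
  exact hv.2 (mem_neighborhood.2 ⟨w, hwS, hvw.symm⟩)

theorem neighborhood_subset_of_isBipartiteWith (hAB : H.IsBipartiteWith A B) (hS : S ⊆ A) :
    neighborhood H S ⊆ B :=
  Set.iUnion₂_subset fun _ hv => SimpleGraph.isBipartiteWith_neighborSet_subset hAB (hS hv)

theorem edgesIn_eq_zero_of_isIndepSet (hS : H.IsIndepSet S) : edgesIn H S = 0 := by
  suffices {e : Sym2 V | e ∈ H.edgeSet ∧ ∀ x ∈ e, x ∈ S} = ∅ by rw [edgesIn, this, Set.ncard_empty]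
  refine Set.eq_empty_of_forall_notMem (Sym2.ind fun v w ⟨hvw, hmem⟩ => ?_)
  rw [SimpleGraph.mem_edgeSet] at hvw
  exact hS (hmem v (Sym2.mem_mk_left v w)) (hmem w (Sym2.mem_mk_right v w)) hvw.ne hvw

end Neighborhood

section PerfectTwoMatching

variable {H : SimpleGraph V}

theorem SatisfiesHall.exists_perm [Finite V] (hH : SatisfiesHall H) :
    ∃ σ : Equiv.Perm V, ∀ v, H.Adj v (σ v) := by
  classical
  have := Fintype.ofFinite V
  obtain ⟨f, hf, hadj⟩ :=
    (Fintype.all_card_le_filter_rel_iff_exists_injective H.Adj).1 fun S => by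
      simpa only [← Set.ncard_coe_finset, Finset.coe_filter_univ, ← mem_neighborhood,
        ← Finset.mem_coe, Set.ofPred_mem_eq] using hH S
  exact ⟨Equiv.ofBijective f (Finite.injective_iff_bijective.1 hf), hadj⟩

theorem exists_isPerfectBMatching_two_of_perm [Fintype V] {σ : Equiv.Perm V}
    (hσ : ∀ v, H.Adj v (σ v)) :
    ∃ ω : Sym2 V → ℕ, IsPerfectBMatching H (fun _ => 2) ω := by
  classical
  let weight (v w : V) : ℕ := (if σ v = w then 1 else 0) + if σ w = v then 1 else 0
  refine ⟨Sym2.lift ⟨weight, fun v w => add_comm _ _⟩, ?_, fun v => ?_⟩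
  · refine Sym2.ind fun v w hvw => ?_
    have hv : σ v ≠ w := fun h => hvw (h ▸ hσ v)
    have hw : σ w ≠ v := fun h => hvw (h ▸ hσ w).symm
    simp only [Sym2.lift_mk, weight, if_neg hv, if_neg hw]
  · calc ∑ w, weight v w
        = ∑ w, (if σ v = w then 1 else 0) + ∑ w, if w = σ.symm v then 1 else 0 := by
          simp only [weight, Finset.sum_add_distrib, Equiv.eq_symm_apply]
      _ = 2 := by simp only [Finset.sum_ite_eq, Finset.sum_ite_eq', Finset.mem_univ, if_true]

end PerfectTwoMatching

section TypeOne

variable [Finite V] {H : SimpleGraph V}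

theorem SatisfiesHall.of_isIndepSet
    (hind : ∀ S : Set V, H.IsIndepSet S → S.ncard ≤ (neighborhood H S).ncard) :
    SatisfiesHall H := by
  intro S
  set N := neighborhood H S
  have hsub : neighborhood H (S \ N) ⊆ N \ S := fun w hw =>
    ⟨Set.biUnion_subset_biUnion_left Set.sdiff_subset hw,
      neighborhood_sdiff_neighborhood_subset_compl hw⟩
  have hindep : H.IsIndepSet (S \ N) := disjoint_neighborhood_iff_isIndepSet.1
    (Set.disjoint_left.2 fun _ hv hv' => (hsub hv').2 hv.1)
  calc S.ncard = (S ∩ N).ncard + (S \ N).ncard :=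
        (Set.ncard_inter_add_ncard_sdiff_eq_ncard S N).symm
    _ ≤ (S ∩ N).ncard + (N \ S).ncard :=
        Nat.add_le_add_left ((hind _ hindep).trans (Set.ncard_le_ncard hsub)) _
    _ = N.ncard := by
        rw [Set.inter_comm, Set.ncard_inter_add_ncard_sdiff_eq_ncard]

theorem RobMat1.satisfiesHall {μ ν : ℝ} (hμν : μ ≤ ν) (hH : RobMat1 H μ ν) : SatisfiesHall H := by
  refine .of_isIndepSet fun S hS => ?_
  by_contra! hlt
  obtain ⟨v, hv⟩ : S.Nonempty := Set.nonempty_of_ncard_ne_zero (by lia)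
  have : Nonempty V := ⟨v⟩
  have hn : (0 : ℝ) < Nat.card V := mod_cast Nat.card_pos
  have hN : (1 / 2 - μ) * (Nat.card V : ℝ) ≤ (neighborhood H S).ncard :=
    (hH.1 v).trans (mod_cast ncard_neighborSet_le_ncard_neighborhood hv)
  have hNS : ((neighborhood H S).ncard : ℝ) < S.ncard := mod_cast hlt
  have hν : ν ≤ 0 := by
    have hspan : ν * (Nat.card V : ℝ) ^ 2 ≤ edgesIn H S :=
      hH.2 S ((mul_le_mul_of_nonneg_right (by linarith) hn.le).trans (hN.trans hNS.le))
    rw [edgesIn_eq_zero_of_isIndepSet hS, Nat.cast_zero] at hspan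
    exact nonpos_of_mul_nonpos_left hspan (by positivity)
  have hdisj : (S.ncard : ℝ) + (neighborhood H S).ncard ≤ Nat.card V := by
    rw [← Nat.cast_add, ← Set.ncard_union_eq (disjoint_neighborhood_iff_isIndepSet.2 hS)]
    exact mod_cast Set.ncard_le_card _
  have hhalf : 1 / 2 * (Nat.card V : ℝ) ≤ (1 / 2 - μ) * Nat.card V :=
    mul_le_mul_of_nonneg_right (by linarith) hn.le
  linarith

end TypeOne

section TypeTwo

variable [Finite V] {H : SimpleGraph V} {A B S : Set V} {d D : ℝ}

theorem le_ncard_neighborhood_of_ncard_neighborhood_lt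
    (hmin : ∀ v, d ≤ (H.neighborSet v).ncard)
    (hlow : ({v | ((H.neighborSet v).ncard : ℝ) < D}.ncard : ℝ) ≤ d)
    (hS : (neighborhood H S).ncard < S.ncard) : D ≤ (neighborhood H S).ncard := by
  have hdeg (v : V) (hv : v ∈ S) : ((H.neighborSet v).ncard : ℝ) ≤ (neighborhood H S).ncard :=
    mod_cast ncard_neighborSet_le_ncard_neighborhood hv
  obtain ⟨u, hu⟩ : S.Nonempty := Set.nonempty_of_ncard_ne_zero (by lia)
  have hlarge : {v | ((H.neighborSet v).ncard : ℝ) < D}.ncard < S.ncard := by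
    have := (hlow.trans (hmin u)).trans (hdeg u hu)
    exact lt_of_le_of_lt (mod_cast this) hS
  obtain ⟨v, hvS, hv⟩ := Set.exists_mem_notMem_of_ncard_lt_ncard hlarge
  exact (not_lt.1 hv).trans (hdeg v hvS)

theorem ncard_le_ncard_neighborhood_of_isBipartiteWith (hAB : H.IsBipartiteWith A B)
    (hcard : A.ncard ≤ B.ncard) (hmin : ∀ v, d ≤ (H.neighborSet v).ncard)
    (hlow : ({v | ((H.neighborSet v).ncard : ℝ) < D}.ncard : ℝ) ≤ d)
    (hD : A.ncard ≤ 2 * D) (hS : S ⊆ A) : S.ncard ≤ (neighborhood H S).ncard := by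
  by_contra! hlt
  set N := neighborhood H S
  have hsub : neighborhood H (B \ N) ⊆ A \ S := fun w hw =>
    ⟨neighborhood_subset_of_isBipartiteWith hAB.symm Set.sdiff_subset hw,
      neighborhood_sdiff_neighborhood_subset_compl hw⟩
  have hle : (neighborhood H (B \ N)).ncard ≤ (A \ S).ncard := Set.ncard_le_ncard hsub
  have hA : (A \ S).ncard + S.ncard = A.ncard := Set.ncard_sdiff_add_ncard_of_subset hS
  have hB : (B \ N).ncard + N.ncard = B.ncard :=
    Set.ncard_sdiff_add_ncard_of_subset (neighborhood_subset_of_isBipartiteWith hAB hS)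
  have hlt' : (neighborhood H (B \ N)).ncard < (B \ N).ncard := by lia
  have hDN : D ≤ N.ncard := le_ncard_neighborhood_of_ncard_neighborhood_lt hmin hlow hlt
  have hDN' : D ≤ (neighborhood H (B \ N)).ncard :=
    le_ncard_neighborhood_of_ncard_neighborhood_lt hmin hlow hlt'
  have hsum : (N.ncard + (neighborhood H (B \ N)).ncard : ℝ) < A.ncard := by
    exact_mod_cast (show N.ncard + (neighborhood H (B \ N)).ncard < A.ncard by lia)
  linarith

theorem SatisfiesHall.of_isBipartiteWith (hAB : H.IsBipartiteWith A B) (hcover : A ∪ B = Set.univ)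
    (hA : ∀ S ⊆ A, S.ncard ≤ (neighborhood H S).ncard)
    (hB : ∀ S ⊆ B, S.ncard ≤ (neighborhood H S).ncard) : SatisfiesHall H := by
  intro S
  have hsplit : S = (S ∩ A) ∪ (S ∩ B) := by
    rw [← Set.inter_union_distrib_left, hcover, Set.inter_univ]
  have hdisj : Disjoint (neighborhood H (S ∩ A)) (neighborhood H (S ∩ B)) :=
    hAB.disjoint.symm.mono (neighborhood_subset_of_isBipartiteWith hAB Set.inter_subset_right)
      (neighborhood_subset_of_isBipartiteWith hAB.symm Set.inter_subset_right)
  calc S.ncard ≤ (S ∩ A).ncard + (S ∩ B).ncard := by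
        conv_lhs => rw [hsplit]
        exact Set.ncard_union_le _ _
    _ ≤ (neighborhood H (S ∩ A)).ncard + (neighborhood H (S ∩ B)).ncard :=
        add_le_add (hA _ Set.inter_subset_right) (hB _ Set.inter_subset_right)
    _ = (neighborhood H S).ncard := by
        rw [← Set.ncard_union_eq hdisj, ← neighborhood_union, ← hsplit]

theorem RobMat2.satisfiesHall {μ : ℝ} (hμ : μ ≤ 1 / 128) (hH : RobMat2 H μ) :
    SatisfiesHall H := by
  obtain ⟨A, B, hcover, hdisj, hcard, hadj, hmin, hlow⟩ := hH
  have hbip : H.IsBipartiteWith A B := ⟨hdisj, hadj⟩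
  have hn : (0 : ℝ) ≤ Nat.card V := Nat.cast_nonneg _
  have hlow' := hlow.trans (mul_le_mul_of_nonneg_right
    (show 1 / 64 + μ ≤ 1 / 32 - μ by linarith) hn)
  have hparts : (A.ncard + B.ncard : ℝ) = Nat.card V := by
    rw [← Nat.cast_add, ← Set.ncard_union_eq hdisj, hcover, Set.ncard_univ]
  have hcardR : (A.ncard : ℝ) = B.ncard := mod_cast hcard
  have hD : (A.ncard : ℝ) ≤ 2 * ((1 / 3 - μ) * Nat.card V) := by
    have := mul_le_mul_of_nonneg_right (show 1 / 4 ≤ 1 / 3 - μ by linarith) hn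
    linarith
  exact .of_isBipartiteWith hbip hcover
    (fun _ => ncard_le_ncard_neighborhood_of_isBipartiteWith hbip hcard.le hmin hlow' hD)
    (fun _ => ncard_le_ncard_neighborhood_of_isBipartiteWith hbip.symm hcard.ge hmin hlow'
      (hcardR ▸ hD))

end TypeTwo

theorem robustly_matchable_has_perfect_two_matching_general [Fintype V] {H : SimpleGraph V}
    {μ ν : ℝ} (hμν : μ ≤ ν) (hμ : μ ≤ 1 / 128) (hH : RobMat H μ ν) :
    ∃ ω : Sym2 V → ℕ, IsPerfectBMatching H (fun _ => 2) ω := by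
  have hall : SatisfiesHall H := hH.elim (·.satisfiesHall hμν) (·.satisfiesHall hμ)
  obtain ⟨σ, hσ⟩ := hall.exists_perm
  exact exists_isPerfectBMatching_two_of_perm hσ

theorem robustly_matchable_has_perfect_two_matching {W : Type} [Fintype W]
    (H : SimpleGraph W) (μ ν : ℝ) (hμν : μ ≤ ν) (hν : ν < 1 / 1000)
    (hH : RobMat H μ ν) :
    ∃ ω : Sym2 W → ℕ, IsPerfectBMatching H (fun _ => 2) ω := by
  exact robustly_matchable_has_perfect_two_matching_general hμν (by linarith) hH

end Paper
end

section
/- Let t ∈ ℤ≥0 and γ > 0, and let H be a (μ, ν)-robustly 2-matchable graph on m vertices such that m/t ≤ γ ≤ μ ≤ ν/4 < 1/4000. Then H has a perfect b-matching for every function b : V(H) → ℤ≥0 such that (a) (1−γ)·t ≤ b(x) ≤ t for every vertex x, (b) the sum of b(x) over the vertices x of each connected component of H is even, and (c) if H is of type 2 with bipartition {X, Y}, then the sum of b over X equals the sum of b over Y. -/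
/-!
STATEMENT 7: Let `t ∈ ℤ≥0` and `γ > 0`, and let `H` be a `(μ, ν)`-robustly 2-matchable
graph on `m` vertices such that `m/t ≤ γ ≤ μ ≤ ν/4 < 1/4000`. Then `H` has a perfect
`b`-matching for every `b : V(H) → ℤ≥0` such that (a) `(1−γ)·t ≤ b(x) ≤ t` for every
vertex `x`, (b) the sum of `b` over each connected component of `H` is even, and (c) if
`H` is of type 2 with bipartition `{X, Y}`, then the sum of `b` over `X` equals the sum
of `b` over `Y`.
-/

namespace Paper

variable {V : Type*}

/-!
A perfect `b`-matching of `H` is the image of a perfect matching of the blow-up of `H`, in which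
every vertex `v` is replaced by a fibre of `b v` independent copies.

For type 1, suppose that deleting a set `U` from the blow-up violates Tutte's condition. If `U`
contains no whole fibre, then at most two components remain, because two of any three vertices of
`H` have a common neighbour; parity then forces `U` to be empty, and the blow-up itself has no odd
component. Otherwise let `C` be the set of vertices whose fibres lie in `U`. Two remaining copies
of a vertex with a neighbour outside `C` lie in one component, so there are at most `b(I) + m`
components, where `I` is the set of isolated vertices of `H - C`. Either `I` is empty, or `C`
contains a neighbourhood while the independent set `I` has fewer than `(1 / 2 - ν) m` vertices; in
both cases `b(I) + m ≤ b(C) ≤ |U|`, a contradiction.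

For type 2, Hall's condition for `S ⊆ A` amounts to `b(S) ≤ b(N(S))`, or equivalently to
`b(B \ N(S)) ≤ b(A \ S)`. The degree conditions force one of `S` and `B \ N(S)` to be small, and
a small set is outweighed by its neighbourhood.
-/

open SimpleGraph

section Pushforward

variable {X : Type*} [Finite X]

lemma sum_ncard_inter_preimage [Fintype V] (s : Set X) (g : X → V) :
    ∑ w, (s ∩ g ⁻¹' {w}).ncard = s.ncard := by
  classical
  lift s to Finset X using s.toFinite
  rw [Set.ncard_coe_finset, Finset.card_eq_sum_card_fiberwise (f := g) (t := Finset.univ) (by simp)]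
  refine Finset.sum_congr rfl fun w _ => ?_
  rw [← Set.ncard_coe_finset]
  congr 1
  ext x
  simp

-- Each edge of `H` is weighted by the number of edges of `M` lying over it.
lemma exists_isPerfectBMatching_of_hom [Fintype V] {G : SimpleGraph X} {H : SimpleGraph V}
    (f : G →g H) {M : G.Subgraph} (hM : M.IsPerfectMatching) :
    ∃ ω : Sym2 V → ℕ, IsPerfectBMatching H (fun v => (f ⁻¹' {v}).ncard) ω := by
  choose partner h_adj _ using Subgraph.isPerfectMatching_iff.1 hM
  have h_inv : Function.Involutive partner := fun x =>
    hM.1.eq_of_adj_left (h_adj (partner x)) (h_adj x).symm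
  have h_symm : ∀ v w, (f ⁻¹' {v} ∩ f ∘ partner ⁻¹' {w}).ncard =
      (f ⁻¹' {w} ∩ f ∘ partner ⁻¹' {v}).ncard := fun v w => by
    rw [← Set.ncard_image_of_injective _ h_inv.injective,
      Set.image_eq_preimage_of_inverse h_inv.leftInverse h_inv.rightInverse]
    congr 1
    ext x
    simp [h_inv x, and_comm]
  refine ⟨Sym2.lift ⟨_, h_symm⟩, fun e h_not_mem => ?_, fun v => ?_⟩
  · induction e with | _ v w
    refine (Set.ncard_eq_zero).2 (Set.eq_empty_of_forall_notMem ?_)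
    rintro x ⟨rfl, rfl⟩
    exact h_not_mem (f.map_adj (h_adj x).adj_sub)
  · exact sum_ncard_inter_preimage (f ⁻¹' {v}) (f ∘ partner)

end Pushforward

section Blowup

/-- The blow-up of `H` in which every vertex `v` is replaced by `b v` independent copies.
Its perfect matchings project to perfect `b`-matchings of `H`. -/
abbrev blowup (H : SimpleGraph V) (b : V → ℕ) : SimpleGraph (Σ v, Fin (b v)) :=
  H.comap Sigma.fst

/-- The set of copies of the vertices of `S` in the blow-up. Its cardinality is the total
`b`-weight of `S`, so that weights of sets can be compared by inclusions and bijections. -/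
abbrev copies (b : V → ℕ) (S : Set V) : Set (Σ v, Fin (b v)) :=
  Sigma.fst ⁻¹' S

variable [Finite V] {b : V → ℕ} {S T : Set V}

lemma ncard_copies (b : V → ℕ) (S : Set V) : (copies b S).ncard = ∑ᶠ v ∈ S, b v := by
  classical
  lift S to Finset V using S.toFinite
  have h_sigma : copies b S = (S.sigma fun _ => Finset.univ : Finset (Σ v, Fin (b v))) := by
    ext x
    simp
  rw [h_sigma, Set.ncard_coe_finset, finsum_mem_coe_finset, Finset.card_sigma]
  simp

lemma ncard_copies_le_mul {c : ℝ} (hb : ∀ v, b v ≤ c) :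
    ((copies b S).ncard : ℝ) ≤ S.ncard * c := by
  lift S to Finset V using S.toFinite
  rw [ncard_copies, finsum_mem_coe_finset, Set.ncard_coe_finset, Nat.cast_sum, ← nsmul_eq_mul]
  exact Finset.sum_le_card_nsmul _ _ _ fun v _ => hb v

lemma mul_le_ncard_copies {c : ℝ} (hb : ∀ v, c ≤ b v) :
    S.ncard * c ≤ (copies b S).ncard := by
  lift S to Finset V using S.toFinite
  rw [ncard_copies, finsum_mem_coe_finset, Set.ncard_coe_finset, Nat.cast_sum, ← nsmul_eq_mul]
  exact Finset.card_nsmul_le_sum _ _ _ fun v _ => hb v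

lemma ncard_copies_le_ncard_copies {γ : ℝ} {t : ℕ}
    (hb : ∀ v, (1 - γ) * (t : ℝ) ≤ (b v : ℝ) ∧ b v ≤ t)
    (h : (S.ncard : ℝ) ≤ (1 - γ) * T.ncard) : (copies b S).ncard ≤ (copies b T).ncard := by
  have h_real : ((copies b S).ncard : ℝ) ≤ (copies b T).ncard :=
    calc ((copies b S).ncard : ℝ) ≤ S.ncard * t :=
          ncard_copies_le_mul fun v => by exact_mod_cast (hb v).2
      _ ≤ (1 - γ) * T.ncard * t := by gcongr
      _ = T.ncard * ((1 - γ) * t) := by ring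
      _ ≤ (copies b T).ncard := mul_le_ncard_copies fun v => (hb v).1
  exact_mod_cast h_real

lemma exists_isPerfectBMatching_of_blowup [Fintype V] {H : SimpleGraph V}
    {M : (blowup H b).Subgraph} (hM : M.IsPerfectMatching) :
    ∃ ω : Sym2 V → ℕ, IsPerfectBMatching H b ω := by
  obtain ⟨ω, hω⟩ := exists_isPerfectBMatching_of_hom (Hom.comap Sigma.fst H) hM
  have h_fibre : ∀ v, (copies b {v}).ncard = b v := fun v => by
    rw [ncard_copies, finsum_mem_singleton]
  exact ⟨ω, hω.1, fun v => (hω.2 v).trans (h_fibre v)⟩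

end Blowup

section Hall

variable {H : SimpleGraph V} {b : V → ℕ} {A B : Set V}

lemma exists_isPerfectBMatching_of_hall [Fintype V] (hAB : H.IsBipartiteWith A B)
    (hall : ∀ S : Set V, (copies b S).ncard ≤ (copies b (⋃ v ∈ S, H.neighborSet v)).ncard) :
    ∃ ω : Sym2 V → ℕ, IsPerfectBMatching H b ω := by
  classical
  have h_blowup : (blowup H b).IsBipartiteWith (copies b A) (copies b B) :=
    ⟨hAB.disjoint.preimage _, fun _ _ hxy => hAB.mem_of_adj hxy⟩
  obtain ⟨M, hM⟩ := exists_isPerfectMatching_of_forall_ncard_le h_blowup fun s =>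
    calc s.ncard ≤ (copies b (Sigma.fst '' s)).ncard :=
          Set.ncard_le_ncard (Set.subset_preimage_image _ _)
      _ ≤ (copies b (⋃ v ∈ Sigma.fst '' s, H.neighborSet v)).ncard := hall _
      _ = (⋃ x ∈ s, (blowup H b).neighborSet x).ncard := by
          rw [Set.biUnion_image]
          congr 1
          ext y
          simp
  exact exists_isPerfectBMatching_of_blowup hM

lemma ncard_copies_le_of_forall_subset_part [Finite V] (hAB : H.IsBipartiteWith A B)
    (h_univ : A ∪ B = Set.univ)
    (hA : ∀ S ⊆ A, (copies b S).ncard ≤ (copies b (⋃ v ∈ S, H.neighborSet v)).ncard)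
    (hB : ∀ S ⊆ B, (copies b S).ncard ≤ (copies b (⋃ v ∈ S, H.neighborSet v)).ncard)
    (S : Set V) : (copies b S).ncard ≤ (copies b (⋃ v ∈ S, H.neighborSet v)).ncard := by
  have h_split : S ∩ A ∪ S ∩ B = S := by
    rw [← Set.inter_union_distrib_left, h_univ, Set.inter_univ]
  have h_disj : Disjoint (⋃ v ∈ S ∩ A, H.neighborSet v) (⋃ v ∈ S ∩ B, H.neighborSet v) :=
    hAB.disjoint.symm.mono
      (Set.iUnion₂_subset fun _ hv => isBipartiteWith_neighborSet_subset hAB hv.2)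
      (Set.iUnion₂_subset fun _ hv => isBipartiteWith_neighborSet_subset hAB.symm hv.2)
  calc (copies b S).ncard = (copies b (S ∩ A) ∪ copies b (S ∩ B)).ncard := by
        rw [← Set.preimage_union, h_split]
    _ ≤ (copies b (S ∩ A)).ncard + (copies b (S ∩ B)).ncard := Set.ncard_union_le _ _
    _ ≤ (copies b (⋃ v ∈ S ∩ A, H.neighborSet v)).ncard +
          (copies b (⋃ v ∈ S ∩ B, H.neighborSet v)).ncard :=
        add_le_add (hA _ Set.inter_subset_right) (hB _ Set.inter_subset_right)
    _ = (copies b (⋃ v ∈ S, H.neighborSet v)).ncard := by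
        rw [← Set.ncard_union_eq (h_disj.preimage _), ← Set.preimage_union,
          ← Set.biUnion_union, h_split]

end Hall

section Comap

variable {X : Type*} {H : SimpleGraph V} {f : X → V}

lemma reachable_comap_of_adj_adj {x y z : X} (hx : H.Adj (f x) (f z)) (hy : H.Adj (f y) (f z)) :
    (H.comap f).Reachable x y :=
  (show (H.comap f).Adj x z from hx).reachable.trans
    (show (H.comap f).Adj z y from hy.symm).reachable

lemma reachable_comap_iff (hf : f.Surjective) (hH : ∀ v, ∃ w, H.Adj v w) {x y : X} :
    (H.comap f).Reachable x y ↔ H.Reachable (f x) (f y) := by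
  refine ⟨fun h => h.map (Hom.comap f H), ?_⟩
  rintro ⟨p⟩
  generalize hu : f x = u at p
  generalize hv : f y = v at p
  induction p generalizing x with
  | nil =>
    obtain ⟨w, hw⟩ := hH (f x)
    obtain ⟨z, rfl⟩ := hf w
    exact reachable_comap_of_adj_adj hw (hv.trans hu.symm ▸ hw)
  | @cons _ w _ h_adj _ ih =>
    obtain ⟨z, rfl⟩ := hf w
    subst hu
    exact (show (H.comap f).Adj x z from h_adj).reachable.trans (ih rfl hv)

lemma oddComponents_comap_eq_empty (hf : f.Surjective) (hH : ∀ v, ∃ w, H.Adj v w)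
    (h_even : ∀ v, Even (f ⁻¹' {w | H.Reachable v w}).ncard) :
    (H.comap f).oddComponents = ∅ := by
  refine Set.eq_empty_of_forall_notMem (ConnectedComponent.ind fun x h_odd => ?_)
  have h_supp : ((H.comap f).connectedComponentMk x).supp = f ⁻¹' {w | H.Reachable (f x) w} := by
    ext y
    rw [ConnectedComponent.mem_supp_iff, ConnectedComponent.eq, reachable_comap_iff hf hH,
      reachable_comm]
    rfl
  exact Nat.not_even_iff_odd.2 h_odd (h_supp ▸ h_even (f x))

lemma ncard_oddComponents_comap_le_two [Finite X] (hf : f.Surjective)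
    (hH : ∀ u v w, (H.commonNeighbors u v).Nonempty ∨ (H.commonNeighbors u w).Nonempty ∨
      (H.commonNeighbors v w).Nonempty) :
    (H.comap f).oddComponents.ncard ≤ 2 := by
  have h_same : ∀ {x y}, (H.commonNeighbors (f x) (f y)).Nonempty →
      (H.comap f).connectedComponentMk x = (H.comap f).connectedComponentMk y := by
    rintro x y ⟨v, hx, hy⟩
    obtain ⟨z, rfl⟩ := hf v
    exact ConnectedComponent.sound (reachable_comap_of_adj_adj hx hy)
  by_contra! h_two_lt
  obtain ⟨c, -, d, -, e, -, hcd, hce, hde⟩ := (Set.two_lt_ncard (Set.toFinite _)).1 h_two_lt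
  induction c using ConnectedComponent.ind with | _ x
  induction d using ConnectedComponent.ind with | _ y
  induction e using ConnectedComponent.ind with | _ z
  rcases hH (f x) (f y) (f z) with h | h | h
  exacts [hcd (h_same h), hce (h_same h), hde (h_same h)]

lemma card_connectedComponent_le [Finite V] [Finite X] {G : SimpleGraph X} (f : X → V) (I : Set V)
    (h : ∀ x y, f x = f y → f x ∉ I → G.Reachable x y) :
    Nat.card G.ConnectedComponent ≤ (f ⁻¹' I).ncard + Nat.card V := by
  classical
  let code : G.ConnectedComponent → (f ⁻¹' I) ⊕ V := fun c =>
    if hc : f c.out ∈ I then .inl ⟨c.out, hc⟩ else .inr (f c.out)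
  have h_inj : code.Injective := fun c d hcd => by
    rw [← Quot.out_eq c, ← Quot.out_eq d]
    by_cases hc : f c.out ∈ I <;> by_cases hd : f d.out ∈ I <;>
      simp only [code, hc, hd, dite_true, dite_false, Sum.inl.injEq, Sum.inr.injEq,
        Subtype.mk.injEq, reduceCtorEq] at hcd
    · rw [hcd]
    · exact ConnectedComponent.sound (h _ _ hcd hc)
  calc Nat.card G.ConnectedComponent ≤ Nat.card ((f ⁻¹' I) ⊕ V) :=
        Nat.card_le_card_of_injective code h_inj
    _ = (f ⁻¹' I).ncard + Nat.card V := by rw [Nat.card_sum, Nat.card_coe_set_eq]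

/-- The vertices outside `C` all of whose neighbours lie in `C`, that is, the isolated vertices
of `H - C`. -/
def isolatedOutside (H : SimpleGraph V) (C : Set V) : Set V :=
  {v | v ∉ C ∧ H.neighborSet v ⊆ C}

lemma ncard_oddComponents_comap_le [Finite V] [Finite X] :
    (H.comap f).oddComponents.ncard ≤
      (f ⁻¹' isolatedOutside H (Set.range f)ᶜ).ncard + Nat.card V := by
  refine (Set.ncard_le_card _).trans (card_connectedComponent_le f _ fun x y hxy hx => ?_)
  obtain ⟨v, h_adj, hv⟩ : ∃ v, H.Adj (f x) v ∧ v ∈ Set.range f := by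
    simpa [isolatedOutside, Set.not_subset] using hx
  obtain ⟨z, rfl⟩ := hv
  exact reachable_comap_of_adj_adj h_adj (hxy ▸ h_adj)

end Comap

section Tutte

variable {X : Type*} {H : SimpleGraph V} {f : X → V}

lemma coe_deleteVerts_comap (U : Set X) :
    ((⊤ : (H.comap f).Subgraph).deleteVerts U).coe = H.comap fun x => f x.1 := by
  ext x y
  simp [x.2.2, y.2.2]

lemma range_deleteVerts_comap (U : Set X) :
    Set.range (fun x : ((⊤ : (H.comap f).Subgraph).deleteVerts U).verts => f x.1) =
      {v | f ⁻¹' {v} ⊆ U}ᶜ := by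
  ext v
  simp [Set.not_subset, and_comm]

lemma not_isTutteViolator_comap_empty (hf : f.Surjective) (hH : ∀ v, ∃ w, H.Adj v w)
    (h_even : ∀ v, Even (f ⁻¹' {w | H.Reachable v w}).ncard) :
    ¬ (H.comap f).IsTutteViolator ∅ := by
  rw [IsTutteViolator, coe_deleteVerts_comap, oddComponents_comap_eq_empty _ hH]
  · simp
  · intro v
    rw [← Set.ncard_image_of_injective _ Subtype.val_injective]
    convert h_even v using 2
    ext x
    simp
  · rw [← Set.range_eq_univ, range_deleteVerts_comap]
    simpa [Set.eq_univ_iff_forall, Set.subset_empty_iff, Set.preimage_singleton_eq_empty] using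
      fun v => hf v

variable [Finite X]

lemma ncard_oddComponents_deleteVerts_comap_le_two {U : Set X} (hU : ∀ v, ¬ f ⁻¹' {v} ⊆ U)
    (hH : ∀ u v w, (H.commonNeighbors u v).Nonempty ∨ (H.commonNeighbors u w).Nonempty ∨
      (H.commonNeighbors v w).Nonempty) :
    ((⊤ : (H.comap f).Subgraph).deleteVerts U).coe.oddComponents.ncard ≤ 2 := by
  rw [coe_deleteVerts_comap]
  refine ncard_oddComponents_comap_le_two (Set.range_eq_univ.1 ?_) hH
  rw [range_deleteVerts_comap]
  exact Set.eq_univ_of_forall hU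

lemma ncard_oddComponents_deleteVerts_comap_le [Finite V] (U : Set X) :
    ((⊤ : (H.comap f).Subgraph).deleteVerts U).coe.oddComponents.ncard ≤
      (f ⁻¹' isolatedOutside H {v | f ⁻¹' {v} ⊆ U}).ncard + Nat.card V := by
  rw [coe_deleteVerts_comap]
  refine ncard_oddComponents_comap_le.trans (Nat.add_le_add_right ?_ _)
  rw [range_deleteVerts_comap, compl_compl]
  exact Set.ncard_le_ncard_of_injOn Subtype.val (fun _ hx => hx) Subtype.val_injective.injOn

lemma ncard_add_two_le_of_isTutteViolator {G : SimpleGraph X} (h_even : Even (Nat.card X))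
    {U : Set X} (hU : G.IsTutteViolator U) :
    U.ncard + 2 ≤ ((⊤ : G.Subgraph).deleteVerts U).coe.oddComponents.ncard := by
  have h_card : ((⊤ : G.Subgraph).deleteVerts U).verts.ncard + U.ncard = Nat.card X := by
    rw [Subgraph.deleteVerts_verts, Subgraph.verts_top, ← Set.compl_eq_univ_sdiff, add_comm,
      Set.ncard_add_ncard_compl]
  have h_parity := odd_ncard_oddComponents ((⊤ : G.Subgraph).deleteVerts U).coe
  rw [Nat.card_coe_set_eq] at h_parity
  rw [IsTutteViolator] at hU
  grind

theorem exists_isPerfectMatching_comap_of_commonNeighbors [Finite V]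
    (hH : ∀ u v w, (H.commonNeighbors u v).Nonempty ∨ (H.commonNeighbors u w).Nonempty ∨
      (H.commonNeighbors v w).Nonempty)
    (h_even : ∀ v, Even (f ⁻¹' {w | H.Reachable v w}).ncard)
    (h_isolated : ∀ C : Set V, C.Nonempty →
      (f ⁻¹' isolatedOutside H C).ncard + Nat.card V ≤ (f ⁻¹' C).ncard) :
    ∃ M : (H.comap f).Subgraph, M.IsPerfectMatching := by
  have h_nbr : ∀ v, ∃ w, H.Adj v w := fun v => by
    rcases hH v v v with ⟨w, hw, -⟩ | ⟨w, hw, -⟩ | ⟨w, hw, -⟩ <;> exact ⟨w, hw⟩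
  have h_surj : f.Surjective := fun v => by
    have := Nonempty.intro v
    exact Set.nonempty_of_ncard_ne_zero <| ne_of_gt <|
      (Nat.card_pos (α := V)).trans_le (le_of_add_le_right (h_isolated {v} ⟨v, rfl⟩))
  have h_card_even : Even (Nat.card X) := by
    rw [← Nat.not_odd_iff_even, ← odd_ncard_oddComponents (H.comap f),
      oddComponents_comap_eq_empty h_surj h_nbr h_even, Set.ncard_empty]
    exact Nat.not_odd_zero
  by_contra! h_no_matching
  obtain ⟨U, hU⟩ := exists_isTutteViolator h_no_matching h_card_even
  have h_excess := ncard_add_two_le_of_isTutteViolator h_card_even hU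
  by_cases h_whole_fibre : ∃ v, f ⁻¹' {v} ⊆ U
  · set C : Set V := {v | f ⁻¹' {v} ⊆ U}
    have h_odd : _ ≤ (f ⁻¹' isolatedOutside H C).ncard + Nat.card V :=
      ncard_oddComponents_deleteVerts_comap_le U
    have h_deleted : (f ⁻¹' C).ncard ≤ U.ncard := Set.ncard_le_ncard fun _ hx => hx rfl
    have h_lower := h_isolated C h_whole_fibre
    omega
  · have h_two := ncard_oddComponents_deleteVerts_comap_le_two (not_exists.1 h_whole_fibre) hH
    obtain rfl : U = ∅ := (Set.ncard_eq_zero).1 (by omega)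
    exact not_isTutteViolator_comap_empty h_surj h_nbr h_even hU

end Tutte

section NonBipartite

variable {H : SimpleGraph V} {b : V → ℕ} {μ ν γ : ℝ} {t : ℕ}

lemma nonempty_commonNeighbors_of_card_lt [Finite V]
    (h_deg : ∀ v, Nat.card V < 3 * (H.neighborSet v).ncard) (u v w : V) :
    (H.commonNeighbors u v).Nonempty ∨ (H.commonNeighbors u w).Nonempty ∨
      (H.commonNeighbors v w).Nonempty := by
  by_contra! h
  obtain ⟨huv, huw, hvw⟩ := h
  have h_disj : Disjoint (H.neighborSet u ∪ H.neighborSet v) (H.neighborSet w) :=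
    Set.disjoint_union_left.2 ⟨Set.disjoint_iff_inter_eq_empty.2 huw,
      Set.disjoint_iff_inter_eq_empty.2 hvw⟩
  have h_card := Set.ncard_le_card (H.neighborSet u ∪ H.neighborSet v ∪ H.neighborSet w)
  rw [Set.ncard_union_eq h_disj,
    Set.ncard_union_eq (Set.disjoint_iff_inter_eq_empty.2 huv)] at h_card
  have := h_deg u
  have := h_deg v
  have := h_deg w
  omega

lemma edgesIn_isolatedOutside (C : Set V) : edgesIn H (isolatedOutside H C) = 0 := by
  have h_empty : {e | e ∈ H.edgeSet ∧ ∀ x ∈ e, x ∈ isolatedOutside H C} = ∅ := by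
    refine Set.eq_empty_of_forall_notMem (Sym2.ind fun x y he => ?_)
    obtain ⟨h_adj, h_mem⟩ := he
    exact (h_mem y (Sym2.mem_mk_right x y)).1 ((h_mem x (Sym2.mem_mk_left x y)).2 h_adj)
  rw [edgesIn, h_empty, Set.ncard_empty]

namespace RobMat1

variable [Finite V]

lemma ncard_isolatedOutside_lt (hH : RobMat1 H μ ν) (hν : 0 < ν) [Nonempty V] (C : Set V) :
    ((isolatedOutside H C).ncard : ℝ) < (1 / 2 - ν) * Nat.card V := by
  have h_card : (0 : ℝ) < Nat.card V := by exact_mod_cast Nat.card_pos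
  by_contra! h_large
  have h_edges := hH.2 _ h_large
  rw [edgesIn_isolatedOutside, Nat.cast_zero] at h_edges
  exact h_edges.not_gt (by positivity)

lemma ncard_isolatedOutside_add_le (hH : RobMat1 H μ ν) (hγ : 0 < γ) (hγμ : γ ≤ μ)
    (hμν : 5 * μ ≤ 2 * ν) (hμ : μ < 1 / 6) {C : Set V} (hC : C.Nonempty) :
    (isolatedOutside H C).ncard + γ ≤ (1 - γ) * C.ncard := by
  set I := isolatedOutside H C
  set m : ℝ := (Nat.card V : ℝ)
  have : Nonempty V := hC.to_type
  have hm : 1 ≤ m := Nat.one_le_cast.2 Nat.card_pos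
  have hγ' : 0 ≤ 1 - γ := by linarith
  rcases I.eq_empty_or_nonempty with hI | ⟨v, hv⟩
  · have hC_card : (1 : ℝ) ≤ C.ncard := by exact_mod_cast hC.ncard_pos
    rw [hI, Set.ncard_empty, Nat.cast_zero]
    linarith [le_mul_of_one_le_right hγ' hC_card]
  · have hI_card : (I.ncard : ℝ) < (1 / 2 - ν) * m :=
      hH.ncard_isolatedOutside_lt (by linarith) C
    have hC_card : (1 / 2 - μ) * m ≤ C.ncard :=
      (hH.1 v).trans (Nat.cast_le.2 (Set.ncard_le_ncard hv.2))
    -- Up to the product `γ * μ` this says `μ + 3 / 2 * γ ≤ ν`, hence the ratio `5 / 2`.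
    have h_coeff : 1 / 2 - ν + γ ≤ (1 - γ) * (1 / 2 - μ) := by nlinarith
    calc I.ncard + γ ≤ (1 / 2 - ν) * m + γ * m :=
          add_le_add hI_card.le (le_mul_of_one_le_right hγ.le hm)
      _ = (1 / 2 - ν + γ) * m := by ring
      _ ≤ (1 - γ) * (1 / 2 - μ) * m := by gcongr
      _ = (1 - γ) * ((1 / 2 - μ) * m) := by ring
      _ ≤ (1 - γ) * C.ncard := by gcongr

lemma ncard_copies_isolatedOutside_add_card_le (hH : RobMat1 H μ ν)
    (hmt : (Nat.card V : ℝ) ≤ γ * t) (hγμ : γ ≤ μ) (hμν : 5 * μ ≤ 2 * ν) (hμ : μ < 1 / 6)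
    (hb : ∀ x, (1 - γ) * (t : ℝ) ≤ (b x : ℝ) ∧ b x ≤ t) {C : Set V} (hC : C.Nonempty) :
    (copies b (isolatedOutside H C)).ncard + Nat.card V ≤ (copies b C).ncard := by
  have : Nonempty V := hC.to_type
  have h_card_pos : (0 : ℝ) < Nat.card V := by exact_mod_cast Nat.card_pos
  have hγ : 0 < γ := pos_of_mul_pos_left (h_card_pos.trans_le hmt) t.cast_nonneg
  have h_real : ((copies b (isolatedOutside H C)).ncard : ℝ) + Nat.card V ≤
      (copies b C).ncard :=
    calc ((copies b (isolatedOutside H C)).ncard : ℝ) + Nat.card V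
      _ ≤ (isolatedOutside H C).ncard * t + γ * t :=
          add_le_add (ncard_copies_le_mul fun v => by exact_mod_cast (hb v).2) hmt
      _ = ((isolatedOutside H C).ncard + γ) * t := by ring
      _ ≤ (1 - γ) * C.ncard * t := by
          gcongr
          exact hH.ncard_isolatedOutside_add_le hγ hγμ hμν hμ hC
      _ = C.ncard * ((1 - γ) * t) := by ring
      _ ≤ (copies b C).ncard := mul_le_ncard_copies fun v => (hb v).1
  exact_mod_cast h_real

lemma card_lt_three_mul_ncard_neighborSet (hH : RobMat1 H μ ν) (hμ : μ < 1 / 6) (v : V) :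
    Nat.card V < 3 * (H.neighborSet v).ncard := by
  have : Nonempty V := ⟨v⟩
  have h_card_pos : (0 : ℝ) < Nat.card V := by exact_mod_cast Nat.card_pos
  have h_real : (Nat.card V : ℝ) < 3 * (H.neighborSet v).ncard := by nlinarith [hH.1 v]
  exact_mod_cast h_real

end RobMat1

theorem RobMat1.exists_isPerfectBMatching [Fintype V] (hH : RobMat1 H μ ν)
    (hmt : (Nat.card V : ℝ) ≤ γ * t) (hγμ : γ ≤ μ) (hμν : 5 * μ ≤ 2 * ν) (hμ : μ < 1 / 6)
    (hb : ∀ x, (1 - γ) * (t : ℝ) ≤ (b x : ℝ) ∧ b x ≤ t)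
    (h_even : ∀ v, Even (∑ᶠ x ∈ {y | H.Reachable v y}, b x)) :
    ∃ ω : Sym2 V → ℕ, IsPerfectBMatching H b ω := by
  obtain ⟨M, hM⟩ := exists_isPerfectMatching_comap_of_commonNeighbors
    (nonempty_commonNeighbors_of_card_lt (hH.card_lt_three_mul_ncard_neighborSet hμ))
    (fun v => ncard_copies b _ ▸ h_even v)
    (fun _ hC => hH.ncard_copies_isolatedOutside_add_card_le hmt hγμ hμν hμ hb hC)
  exact exists_isPerfectBMatching_of_blowup hM

end NonBipartite

section Bipartite

variable {H : SimpleGraph V} {b : V → ℕ} {μ γ : ℝ} {t : ℕ} {A B S T : Set V}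

namespace RobMat2With

lemma symm (hH : RobMat2With H μ A B) : RobMat2With H μ B A := by
  obtain ⟨h_univ, h_disj, h_card, h_adj, h_deg⟩ := hH
  exact ⟨Set.union_comm A B ▸ h_univ, h_disj.symm, h_card.symm,
    fun u v huv => (h_adj u v huv).symm, h_deg⟩

lemma isBipartiteWith (hH : RobMat2With H μ A B) : H.IsBipartiteWith A B :=
  ⟨hH.2.1, fun u v huv => hH.2.2.2.1 u v huv⟩

variable [Finite V]

lemma ncard_left (hH : RobMat2With H μ A B) : (A.ncard : ℝ) = Nat.card V / 2 := by
  obtain ⟨h_univ, h_disj, h_card, -⟩ := hH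
  have h_add : A.ncard + A.ncard = Nat.card V := by
    nth_rw 2 [h_card]
    rw [← Set.ncard_union_eq h_disj, h_univ, Set.ncard_univ]
  rw [← h_add]
  push_cast
  ring

lemma exists_mem_le_ncard_neighborSet (hH : RobMat2With H μ A B)
    (hS : (1 / 64 + μ) * Nat.card V < S.ncard) :
    ∃ v ∈ S, (1 / 3 - μ) * Nat.card V ≤ (H.neighborSet v).ncard := by
  by_contra! h_small
  exact hS.not_ge ((Nat.cast_le.2 (Set.ncard_le_ncard h_small)).trans hH.2.2.2.2.2)

lemma ncard_le_mul_ncard (hH : RobMat2With H μ A B) (hγ : 0 ≤ γ) (hγμ : γ ≤ μ)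
    (hμ : μ ≤ 1 / 130) (hST : ∀ v ∈ S, H.neighborSet v ⊆ T)
    (hS : (S.ncard : ℝ) ≤ (1 - γ) * ((1 / 3 - μ) * Nat.card V)) :
    (S.ncard : ℝ) ≤ (1 - γ) * T.ncard := by
  have hγ' : 0 ≤ 1 - γ := by linarith
  have h_deg_le : ∀ v ∈ S, ((H.neighborSet v).ncard : ℝ) ≤ T.ncard := fun v hv =>
    Nat.cast_le.2 (Set.ncard_le_ncard (hST v hv))
  rcases S.eq_empty_or_nonempty with rfl | ⟨v, hv⟩
  · rw [Set.ncard_empty, Nat.cast_zero]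
    positivity
  rcases le_or_gt (S.ncard : ℝ) ((1 / 64 + μ) * Nat.card V) with h_small | h_large
  · -- For `γ = μ` this inequality fails from about `μ = 1 / 129.5` on, hence the bound `1 / 130`.
    have h_coeff : 1 / 64 + μ ≤ (1 - γ) * (1 / 32 - μ) := by nlinarith
    calc (S.ncard : ℝ) ≤ (1 / 64 + μ) * Nat.card V := h_small
      _ ≤ (1 - γ) * (1 / 32 - μ) * Nat.card V := by gcongr
      _ = (1 - γ) * ((1 / 32 - μ) * Nat.card V) := by ring
      _ ≤ (1 - γ) * T.ncard := by
          gcongr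
          exact (hH.2.2.2.2.1 v).trans (h_deg_le v hv)
  · obtain ⟨u, hu, hu_deg⟩ := hH.exists_mem_le_ncard_neighborSet h_large
    refine hS.trans ?_
    gcongr
    exact hu_deg.trans (h_deg_le u hu)

lemma ncard_le_of_lt_ncard (hH : RobMat2With H μ A B) (hγ : 0 ≤ γ) (hγμ : γ ≤ μ)
    (hμ : μ ≤ 1 / 130) (hT : T ⊆ B) (hST : ∀ v ∈ S, H.neighborSet v ⊆ T)
    (hS : (1 - γ) * ((1 / 3 - μ) * Nat.card V) < S.ncard) :
    ((B \ T).ncard : ℝ) ≤ (1 - γ) * ((1 / 3 - μ) * Nat.card V) := by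
  have h_coeff_small : 1 / 64 + μ ≤ (1 - γ) * (1 / 3 - μ) := by nlinarith
  have h_coeff_half : 1 / 2 - (1 / 3 - μ) ≤ (1 - γ) * (1 / 3 - μ) := by nlinarith
  obtain ⟨v, hv, hv_deg⟩ : ∃ v ∈ S, (1 / 3 - μ) * Nat.card V ≤ (H.neighborSet v).ncard := by
    refine hH.exists_mem_le_ncard_neighborSet (lt_of_le_of_lt ?_ hS)
    rw [← mul_assoc]
    gcongr
  have hT_card : (1 / 3 - μ) * Nat.card V ≤ T.ncard :=
    hv_deg.trans (Nat.cast_le.2 (Set.ncard_le_ncard (hST v hv)))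
  calc ((B \ T).ncard : ℝ) = Nat.card V / 2 - T.ncard := by
        rw [Set.cast_ncard_sdiff hT (Set.toFinite B), hH.symm.ncard_left]
    _ ≤ Nat.card V / 2 - (1 / 3 - μ) * Nat.card V := by gcongr
    _ = (1 / 2 - (1 / 3 - μ)) * Nat.card V := by ring
    _ ≤ (1 - γ) * (1 / 3 - μ) * Nat.card V := by gcongr
    _ = (1 - γ) * ((1 / 3 - μ) * Nat.card V) := by ring

lemma ncard_copies_le_of_subset_left (hH : RobMat2With H μ A B) (hγ : 0 ≤ γ) (hγμ : γ ≤ μ)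
    (hμ : μ ≤ 1 / 130) (hb : ∀ x, (1 - γ) * (t : ℝ) ≤ (b x : ℝ) ∧ b x ≤ t)
    (h_sum : (copies b A).ncard = (copies b B).ncard) (hS : S ⊆ A) :
    (copies b S).ncard ≤ (copies b (⋃ v ∈ S, H.neighborSet v)).ncard := by
  set N := ⋃ v ∈ S, H.neighborSet v
  have hSN : ∀ v ∈ S, H.neighborSet v ⊆ N := fun v hv => Set.subset_biUnion_of_mem hv
  have hNB : N ⊆ B := Set.iUnion₂_subset fun v hv =>
    isBipartiteWith_neighborSet_subset hH.isBipartiteWith (hS hv)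
  rcases le_or_gt (S.ncard : ℝ) ((1 - γ) * ((1 / 3 - μ) * Nat.card V)) with h_small | h_large
  · exact ncard_copies_le_ncard_copies hb (hH.ncard_le_mul_ncard hγ hγμ hμ hSN h_small)
  · have h_nbr : ∀ w ∈ B \ N, H.neighborSet w ⊆ A \ S := fun w hw v hwv =>
      ⟨isBipartiteWith_neighborSet_subset hH.isBipartiteWith.symm hw.1 hwv,
        fun hv => hw.2 (hSN v hv hwv.symm)⟩
    have h_compl : (copies b (B \ N)).ncard ≤ (copies b (A \ S)).ncard :=
      ncard_copies_le_ncard_copies hb <| hH.symm.ncard_le_mul_ncard hγ hγμ hμ h_nbr <|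
        hH.ncard_le_of_lt_ncard hγ hγμ hμ hNB hSN h_large
    have hA_split : (copies b (A \ S)).ncard + (copies b S).ncard = (copies b A).ncard :=
      Set.ncard_sdiff_add_ncard_of_subset (Set.preimage_mono hS)
    have hB_split : (copies b (B \ N)).ncard + (copies b N).ncard = (copies b B).ncard :=
      Set.ncard_sdiff_add_ncard_of_subset (Set.preimage_mono hNB)
    omega

end RobMat2With

theorem RobMat2With.exists_isPerfectBMatching [Fintype V] (hH : RobMat2With H μ A B)
    (hγ : 0 ≤ γ) (hγμ : γ ≤ μ) (hμ : μ ≤ 1 / 130)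
    (hb : ∀ x, (1 - γ) * (t : ℝ) ≤ (b x : ℝ) ∧ b x ≤ t)
    (h_sum : ∑ᶠ x ∈ A, b x = ∑ᶠ y ∈ B, b y) :
    ∃ ω : Sym2 V → ℕ, IsPerfectBMatching H b ω := by
  rw [← ncard_copies, ← ncard_copies] at h_sum
  exact exists_isPerfectBMatching_of_hall hH.isBipartiteWith <|
    ncard_copies_le_of_forall_subset_part hH.isBipartiteWith hH.1
      (fun _ => hH.ncard_copies_le_of_subset_left hγ hγμ hμ hb h_sum)
      (fun _ => hH.symm.ncard_copies_le_of_subset_left hγ hγμ hμ hb h_sum.symm)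

end Bipartite

lemma isPerfectBMatching_zero [Fintype V] (H : SimpleGraph V) : IsPerfectBMatching H 0 0 :=
  ⟨fun _ _ => rfl, fun _ => Finset.sum_const_zero⟩

theorem robustly_matchable_has_perfect_b_matching_general {W : Type*} [Fintype W]
    (H : SimpleGraph W) (μ ν γ : ℝ) (t : ℕ)
    (hmt : (Nat.card W : ℝ) / (t : ℝ) ≤ γ) (hγμ : γ ≤ μ) (hμν : 5 * μ ≤ 2 * ν)
    (hμ : μ ≤ 1 / 130) (b : W → ℕ)
    (hb : ∀ x : W, (1 - γ) * (t : ℝ) ≤ (b x : ℝ) ∧ b x ≤ t)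
    (hH : (RobMat1 H μ ν ∧ ∀ v : W, Even (∑ᶠ x ∈ {y : W | H.Reachable v y}, b x)) ∨
      ∃ X Y : Set W, RobMat2With H μ X Y ∧ (∑ᶠ x ∈ X, b x) = ∑ᶠ y ∈ Y, b y) :
    ∃ ω : Sym2 W → ℕ, IsPerfectBMatching H b ω := by
  rcases t.eq_zero_or_pos with rfl | ht
  · obtain rfl : b = 0 := funext fun x => Nat.le_zero.1 (hb x).2
    exact ⟨0, isPerfectBMatching_zero H⟩
  rcases hH with ⟨hH, h_even⟩ | ⟨X, Y, hH, h_sum⟩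
  · exact hH.exists_isPerfectBMatching ((div_le_iff₀ (by exact_mod_cast ht)).1 hmt) hγμ hμν
      (by linarith) hb h_even
  · exact hH.exists_isPerfectBMatching (le_trans (by positivity) hmt) hγμ hμ hb h_sum

theorem robustly_matchable_has_perfect_b_matching {W : Type} [Fintype W]
    (H : SimpleGraph W) (μ ν γ : ℝ) (t : ℕ) (hγ : 0 < γ)
    (hmt : (Nat.card W : ℝ) / (t : ℝ) ≤ γ) (hγμ : γ ≤ μ) (hμν : μ ≤ ν / 4)
    (hν : ν / 4 < 1 / 4000)
    (hH : RobMat H μ ν)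
    (b : W → ℕ)
    (hb1 : ∀ x : W, (1 - γ) * (t : ℝ) ≤ (b x : ℝ) ∧ b x ≤ t)
    (hb2 : ∀ v : W, Even (∑ᶠ x ∈ {y : W | H.Reachable v y}, b x))
    (hb3 : ∀ X Y : Set W, RobMat2With H μ X Y →
      (∑ᶠ x ∈ X, b x) = ∑ᶠ y ∈ Y, b y) :
    ∃ ω : Sym2 W → ℕ, IsPerfectBMatching H b ω :=
  robustly_matchable_has_perfect_b_matching_general H μ ν γ t hmt hγμ (by linarith)
    (by linarith) b hb1 (hH.imp (fun h => ⟨h, hb2⟩) fun ⟨X, Y, h⟩ => ⟨X, Y, h, hb3 X Y h⟩)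

end Paper
end

section
/- Let H be an r-edge-coloured bipartite graph with bipartition {A, B}. Suppose that |A| ≥ 100³·r³·|B| and that every vertex in B has at least |A|/100 neighbours in A. Then there are 100r² monochromatic pairwise vertex-disjoint proper cycles and edges in H that together cover all vertices of B. -/
/-!
STATEMENT 8: Let `H` be an `r`-edge-coloured bipartite graph with bipartition `{A, B}`.
Suppose that `|A| ≥ 100³·r³·|B|` and that every vertex in `B` has at least `|A|/100`
neighbours in `A`. Then there are `100r²` monochromatic pairwise vertex-disjoint proper
cycles and edges in `H` that together cover all vertices of `B`.
-/

namespace Paper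

variable {V : Type*}

/-- The number of neighbours of `v` inside the set `W`. -/
noncomputable def degIn (G : SimpleGraph V) (v : V) (W : Set V) : ℕ :=
  (G.neighborSet v ∩ W).ncard

/-- `S` is (the vertex set of) a monochromatic proper cycle or a single edge of `G`. -/
def IsMonoProperCycleOrEdge {r : ℕ} (G : SimpleGraph V) (c : Sym2 V → Fin r)
    (S : Set V) : Prop :=
  (∃ u v, G.Adj u v ∧ S = {u, v}) ∨ IsMonoProperCycle G c S

/-!
Give every `b ∈ B` a colour that is most frequent among its edges to `A`, and let `N b` be the set
of its neighbours in `A` along that colour; it contains at least `1 / (100 r)` of `A`. By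
inclusion–exclusion, among more than `100 r` vertices of one colour some two, `x` and `y`, satisfy
`|N x ∩ N y| ≥ |B|`. Joining all such pairs gives an auxiliary graph on `B` whose independent sets
have at most `100 r ^ 2` vertices, so by Pósa's theorem `100 r ^ 2` cycles, edges and single
vertices partition `B`. Every cyclically consecutive pair `x, y` in one of these has at least `|B|`
candidates for a connecting vertex in `N x ∩ N y`, so by Hall's theorem the connecting vertices can
be chosen distinct; inserting them yields the monochromatic cycles and edges.
-/

section CyclicLists

variable {R : V → V → Prop} {S : Finset V} {l : List V} {ι : Type*} {f : ι → List V}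

theorem chain_coe_iff_forall_rel_formPerm [DecidableEq V] (hl : l.Nodup) :
    (l : Cycle V).Chain R ↔ ∀ x ∈ l, R x (l.formPerm x) := by
  obtain _ | ⟨a, t⟩ := l
  · simp
  rw [Cycle.chain_coe_cons, ← List.cons_append, List.isChain_iff_getElem,
    List.forall_mem_iff_getElem]
  simp only [List.length_append, List.length_singleton, Nat.add_lt_add_iff_right]
  refine forall₂_congr fun k hk => ?_
  rw [List.getElem_append_left hk, List.formPerm_apply_getElem _ hl]
  rcases Nat.lt_or_ge (k + 1) (a :: t).length with hk' | hk'
  · simp only [List.getElem_append_left hk', Nat.mod_eq_of_lt hk']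
  · obtain rfl : k = t.length := by grind
    simp

/-- The lists `f j`, read as cyclic sequences, partition `S` into closed `R`-chains. A list with a
single entry `x` needs `R x x`, and empty lists are allowed. -/
structure IsCyclicPartition (R : V → V → Prop) (S : Finset V) (f : ι → List V) : Prop where
  nodup : ∀ j, (f j).Nodup
  chain : ∀ j, (f j : Cycle V).Chain R
  disjoint : Pairwise fun j k => (f j).Disjoint (f k)
  mem_iff : ∀ x, x ∈ S ↔ ∃ j, x ∈ f j

theorem IsCyclicPartition.exists_next (hf : IsCyclicPartition R S f) :
    ∃ σ : V → V, (∀ x ∈ S, R x (σ x)) ∧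
      ∀ j, (f j : Cycle V).Chain fun x y => x ∈ f j ∧ y = σ x := by
  classical
  have hnext : ∀ x, ∃ y, ∀ j, x ∈ f j → y = (f j).formPerm x := by
    intro x
    by_cases hx : ∃ j, x ∈ f j
    · obtain ⟨j, hj⟩ := hx
      refine ⟨(f j).formPerm x, fun k hk => ?_⟩
      rw [hf.disjoint.eq fun h => h hj hk]
    · exact ⟨x, fun j hj => absurd ⟨j, hj⟩ hx⟩
  choose σ hσ using hnext
  refine ⟨σ, fun x hx => ?_, fun j => ?_⟩
  · obtain ⟨j, hj⟩ := (hf.mem_iff x).1 hx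
    rw [hσ x j hj]
    exact (chain_coe_iff_forall_rel_formPerm (hf.nodup j)).1 (hf.chain j) x hj
  · exact (chain_coe_iff_forall_rel_formPerm (hf.nodup j)).2 fun x hx => ⟨hx, (hσ x j hx).symm⟩

theorem exists_isChain_forall_rel_getLast_mem (R : V → V → Prop) {s : V} (hs : s ∈ S) :
    ∃ l : List V, (s :: l).Nodup ∧ (∀ x ∈ s :: l, x ∈ S) ∧ (s :: l).IsChain R ∧
      ∀ x ∈ S, R ((s :: l).getLast (List.cons_ne_nil s l)) x → x ∈ s :: l := by
  classical
  induction S using Finset.strongInduction generalizing s with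
  | H S ih =>
    by_cases hnext : ∃ y ∈ S.erase s, R s y
    · obtain ⟨y, hy, hsy⟩ := hnext
      obtain ⟨l, hnd, hlS, hchain, hlast⟩ := ih _ (Finset.erase_ssubset hs) hy
      refine ⟨y :: l, ?_, ?_, List.isChain_cons_cons.2 ⟨hsy, hchain⟩, fun x hx hR => ?_⟩
      · exact List.nodup_cons.2 ⟨fun h => Finset.notMem_erase s S (hlS s h), hnd⟩
      · exact List.forall_mem_cons.2 ⟨hs, fun x hx => Finset.mem_of_mem_erase (hlS x hx)⟩
      · rcases eq_or_ne x s with rfl | hxs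
        · exact List.mem_cons_self
        · exact List.mem_cons_of_mem s (hlast x (Finset.mem_erase.2 ⟨hxs, hx⟩) hR)
    · refine ⟨[], by simp, by simpa using hs, by simp, fun x hx hR => ?_⟩
      by_contra hxs
      exact hnext ⟨x, by simpa [hx] using hxs, hR⟩

theorem exists_chain_forall_rel_mem (R : V → V → Prop) (hrefl : ∀ x ∈ S, R x x)
    (hS : S.Nonempty) :
    ∃ l : List V, l.Nodup ∧ (∀ x ∈ l, x ∈ S) ∧ (l : Cycle V).Chain R ∧
      ∃ v ∈ l, ∀ x ∈ S, R v x → x ∈ l := by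
  classical
  obtain ⟨s, hs⟩ := hS
  obtain ⟨l, hnd, hlS, hchain, hlast⟩ := exists_isChain_forall_rel_getLast_mem R hs
  generalize hv : (s :: l).getLast (List.cons_ne_nil s l) = v at hlast
  have hvl : v ∈ s :: l := hv ▸ List.getLast_mem _
  -- Cut off the initial segment before the first entry `y` related from the end `v` of the chain.
  set p : V → Bool := fun x => ! decide (R v x) with hp
  have hsuffix : (s :: l).dropWhile p <:+ s :: l := List.dropWhile_suffix p
  have hne : (s :: l).dropWhile p ≠ [] := by
    rw [Ne, List.dropWhile_eq_nil_iff]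
    exact fun h => by simpa [hp, hrefl v (hlS v hvl)] using h v hvl
  have hvlast : ((s :: l).dropWhile p).getLast hne = v := by rw [hsuffix.getLast hne, hv]
  have hclose : R v (((s :: l).dropWhile p).head hne) := by
    simpa [hp] using List.head_dropWhile_not p hne
  refine ⟨(s :: l).dropWhile p, hnd.sublist hsuffix.sublist,
    fun x hx => hlS x (hsuffix.subset hx), ?_, v, ?_, fun x hx hvx => ?_⟩
  · rw [Cycle.chain_ne_nil R hne, hvlast]
    exact (hchain.suffix hsuffix).cons_of_ne_nil hne hclose
  · exact hvlast ▸ List.getLast_mem hne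
  · have hx' := hlast x hx hvx
    rw [← List.takeWhile_append_dropWhile (p := p) (l := s :: l), List.mem_append] at hx'
    refine hx'.resolve_left fun h => ?_
    simpa [hp, hvx] using List.mem_takeWhile_imp h

theorem IsCyclicPartition.cons {n : ℕ} {f : Fin n → List V} [DecidableEq V] (hnd : l.Nodup)
    (hlS : ∀ x ∈ l, x ∈ S) (hl : (l : Cycle V).Chain R)
    (hf : IsCyclicPartition R {x ∈ S | x ∉ l} f) :
    IsCyclicPartition R S (Fin.cons l f : Fin (n + 1) → List V) where
  nodup := Fin.forall_fin_succ.2 ⟨hnd, hf.nodup⟩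
  chain := Fin.forall_fin_succ.2 ⟨hl, hf.chain⟩
  disjoint := by
    have hfl : ∀ j, (f j).Disjoint l := fun j x hx =>
      (Finset.mem_filter.1 ((hf.mem_iff x).2 ⟨j, hx⟩)).2
    refine Fin.cases (Fin.cases (by simp) fun k _ => (hfl k).symm) fun j => ?_
    exact Fin.cases (fun _ => hfl j) fun k hjk => hf.disjoint fun h => hjk (congrArg _ h)
  mem_iff x := by
    have := hlS x
    simp only [Fin.exists_fin_succ, Fin.cons_zero, Fin.cons_succ, ← hf.mem_iff, Finset.mem_filter]
    tauto

/-- **Pósa's theorem**, with `R` in the role of "adjacent or equal". -/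
theorem exists_isCyclicPartition [Std.Symm R] {n : ℕ} (hrefl : ∀ x ∈ S, R x x)
    (hindep : ∀ T ⊆ S, (T : Set V).Pairwise (fun x y => ¬ R x y) → T.card ≤ n) :
    ∃ f : Fin n → List V, IsCyclicPartition R S f := by
  classical
  induction n generalizing S with
  | zero =>
    obtain rfl : S = ∅ := by
      refine Finset.eq_empty_of_forall_notMem fun x hx => ?_
      simpa using hindep {x} (by simpa using hx) (by simp)
    exact ⟨fun _ => [], by simp, by simp, by simp [Pairwise], by simp⟩
  | succ n ih =>
    obtain rfl | hS := S.eq_empty_or_nonempty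
    · exact ⟨fun _ => [], by simp, by simp, by simp [Pairwise], by simp⟩
    obtain ⟨l, hnd, hlS, hchain, v, hv, hnbr⟩ := exists_chain_forall_rel_mem R hrefl hS
    obtain ⟨f, hf⟩ := ih (S := {x ∈ S | x ∉ l}) (fun x hx => hrefl x (Finset.mem_filter.1 hx).1) (by
      intro T hT hTindep
      have hTS : ∀ x ∈ T, x ∈ S ∧ x ∉ l := fun x hx => Finset.mem_filter.1 (hT hx)
      have hvR : ∀ x ∈ T, ¬ R v x := fun x hx h => (hTS x hx).2 (hnbr x (hTS x hx).1 h)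
      have hcard := hindep (insert v T)
        (Finset.insert_subset (hlS v hv) fun x hx => (hTS x hx).1) (by
          rw [Finset.coe_insert]
          refine hTindep.insert fun x hx _ => ⟨hvR x hx, fun h => hvR x hx (symm_of R h)⟩)
      rw [Finset.card_insert_of_notMem fun h => (hTS v h).2 hv] at hcard
      exact Nat.le_of_succ_le_succ hcard)
    exact ⟨_, hf.cons hnd hlS hchain⟩

end CyclicLists

section MonochromaticCycles

theorem exists_isCycle_of_chain {G : SimpleGraph V} {l : List V} (hlen : 3 ≤ l.length)
    (hnd : l.Nodup) (hchain : (l : Cycle V).Chain G.Adj) :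
    ∃ (v : V) (w : G.Walk v v), w.IsCycle ∧ ∀ x, x ∈ w.support ↔ x ∈ l := by
  have hl : l ≠ [] := List.ne_nil_of_length_pos (by omega)
  rw [Cycle.chain_ne_nil _ hl] at hchain
  let p := SimpleGraph.Walk.ofSupport l hl hchain.tail
  have hsupp : p.support = l := SimpleGraph.Walk.support_ofSupport hl _
  have hp : p.IsPath := by rwa [SimpleGraph.Walk.isPath_def, hsupp]
  have hclose : G.Adj (l.getLast hl) (l.head hl) :=
    hchain.rel_head? (List.head?_eq_some_head hl)
  refine ⟨_, .cons hclose p, (SimpleGraph.Walk.cons_isCycle_iff p hclose).2 ⟨hp, fun h => ?_⟩, ?_⟩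
  · have hone := hp.length_eq_one_of_mem_edges (Sym2.eq_swap ▸ h)
    have hlen' : p.length = l.length - 1 := SimpleGraph.Walk.length_ofSupport hl _
    omega
  · simp [hsupp]

variable {r : ℕ} {G : SimpleGraph V} {c : Sym2 V → Fin r} {i : Fin r} {g : V → V}
  {l l' : List V} {x : V}

/-- The spanning subgraph of `G` formed by the edges of colour `i`. -/
def colorGraph (G : SimpleGraph V) (c : Sym2 V → Fin r) (i : Fin r) : SimpleGraph V where
  Adj x y := G.Adj x y ∧ c s(x, y) = i
  symm := ⟨fun x y h => ⟨h.1.symm, Sym2.eq_swap (a := x) ▸ h.2⟩⟩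

theorem colorGraph_le : colorGraph G c i ≤ G := fun _ _ h => h.1

theorem isMonoProperCycleOrEdge_of_chain (hlen : 2 ≤ l.length) (hnd : l.Nodup)
    (hchain : (l : Cycle V).Chain (colorGraph G c i).Adj) :
    IsMonoProperCycleOrEdge G c {x | x ∈ l} := by
  obtain hlen | hlen := hlen.eq_or_lt
  · obtain ⟨a, b, rfl⟩ := List.length_eq_two.1 hlen.symm
    refine Or.inl ⟨a, b, ?_, by ext; simp⟩
    exact colorGraph_le ((Cycle.chain_coe_cons _ _ _).1 hchain).rel
  · obtain ⟨v, w, hw, hsupp⟩ := exists_isCycle_of_chain hlen hnd hchain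
    refine Or.inr ⟨i, v, w.mapLe colorGraph_le, hw.mapLe colorGraph_le, fun e he => ?_, ?_⟩
    · rw [SimpleGraph.Walk.edges_mapLe_eq_edges] at he
      induction e with
      | h x y => exact (w.adj_of_mem_edges he).2
    · ext x
      simp [hsupp]

/-- The list `a₁, g a₁, a₂, g a₂, …` obtained from `a₁, a₂, …`. -/
def interleave (g : V → V) (l : List V) : List V :=
  l.flatMap fun x => [x, g x]

theorem mem_interleave : x ∈ interleave g l ↔ x ∈ l ∨ ∃ y ∈ l, g y = x := by
  simp only [interleave, List.mem_flatMap]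
  grind

theorem disjoint_interleave {S : Set V} (hinj : S.InjOn g) (hout : ∀ x ∈ S, g x ∉ S)
    (hl : ∀ x ∈ l, x ∈ S) (hl' : ∀ x ∈ l', x ∈ S) (h : l.Disjoint l') :
    (interleave g l).Disjoint (interleave g l') := by
  intro x hx hx'
  rw [mem_interleave] at hx hx'
  obtain hx | ⟨y, hy, rfl⟩ := hx <;> obtain hx' | ⟨z, hz, hzy⟩ := hx'
  · exact h hx hx'
  · exact hout z (hl' z hz) (hzy ▸ hl x hx)
  · exact hout y (hl y hy) (hl' _ hx')
  · exact h hy (hinj (hl' z hz) (hl y hy) hzy ▸ hz)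

theorem nodup_interleave {S : Set V} (hinj : S.InjOn g) (hout : ∀ x ∈ S, g x ∉ S)
    (hl : ∀ x ∈ l, x ∈ S) (hnd : l.Nodup) : (interleave g l).Nodup := by
  refine List.nodup_flatMap.2 ⟨fun x hx => ?_, hnd.imp_of_mem fun {x y} hx hy hxy => ?_⟩
  · simpa using fun h : x = g x => hout x (hl x hx) (h ▸ hl x hx)
  · have := disjoint_interleave (l := [x]) (l' := [y]) hinj hout (by simpa using hl x hx)
      (by simpa using hl y hy) (by simpa using Ne.symm hxy)
    simpa [interleave] using this

theorem isChain_interleave_append_singleton {R : V → V → Prop} {b : V}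
    (h : (l ++ [b]).IsChain fun x y => R x (g x) ∧ R (g x) y) :
    (interleave g l ++ [b]).IsChain R := by
  induction l with
  | nil => simp [interleave]
  | cons a t ih =>
    have ht := ih h.tail
    cases t with
    | nil => simpa [interleave] using h
    | cons d t =>
      have had := h.rel
      exact List.isChain_cons_cons.2 ⟨had.1, List.isChain_cons_cons.2 ⟨had.2, ht⟩⟩

theorem chain_interleave {R : V → V → Prop}
    (h : (l : Cycle V).Chain fun x y => R x (g x) ∧ R (g x) y) :
    (interleave g l : Cycle V).Chain R := by
  obtain _ | ⟨a, t⟩ := l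
  · exact Cycle.Chain.nil R
  · exact isChain_interleave_append_singleton (l := a :: t) h

theorem isMonoProperCycleOrEdge_interleave {S : Set V} (hinj : S.InjOn g)
    (hout : ∀ x ∈ S, g x ∉ S) (hl : ∀ x ∈ l, x ∈ S) (hnd : l.Nodup) (hne : l ≠ [])
    {col : V → Fin r} (hchain : (l : Cycle V).Chain fun x y => col x = col y ∧
      (colorGraph G c (col x)).Adj x (g x) ∧ (colorGraph G c (col y)).Adj y (g x)) :
    IsMonoProperCycleOrEdge G c {x | x ∈ interleave g l} := by
  classical
  obtain ⟨a, t, rfl⟩ := List.exists_cons_of_ne_nil hne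
  have : IsTrans V fun x y => col x = col y := ⟨fun _ _ _ => Eq.trans⟩
  have hcol : ∀ x ∈ a :: t, col x = col a := fun x hx =>
    Cycle.chain_iff_pairwise.1 (hchain.imp fun _ _ h => h.1) x hx a List.mem_cons_self
  refine isMonoProperCycleOrEdge_of_chain (i := col a) (by simp [interleave])
    (nodup_interleave hinj hout hl hnd) (chain_interleave ?_)
  refine (chain_coe_iff_forall_rel_formPerm hnd).2 fun x hx => ?_
  obtain ⟨hnext, hadj, hadj'⟩ := (chain_coe_iff_forall_rel_formPerm hnd).1 hchain x hx
  rw [← hnext, hcol x hx] at hadj'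
  exact ⟨hcol x hx ▸ hadj, hadj'.symm⟩

end MonochromaticCycles

section Counting

variable {ι β : Type*}

/-- The second Bonferroni inequality, with a common bound on the pairwise intersections. -/
theorem sum_card_le_card_biUnion_add [DecidableEq β] (F : ι → Finset β) {N : ℕ} (T : Finset ι)
    (hT : (T : Set ι).Pairwise fun x y => (F x ∩ F y).card ≤ N) :
    ∑ x ∈ T, (F x).card ≤ (T.biUnion F).card + T.card.choose 2 * N := by
  classical
  induction T using Finset.induction_on with
  | empty => simp
  | insert x T hx ih =>
    rw [Finset.coe_insert] at hT
    have hinter : (F x ∩ T.biUnion F).card ≤ T.card * N := by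
      rw [Finset.inter_biUnion]
      refine Finset.card_biUnion_le_card_mul _ _ _ fun y hy => ?_
      exact hT (Set.mem_insert x _) (Set.mem_insert_of_mem x hy) fun h => hx (h ▸ hy)
    calc ∑ y ∈ insert x T, (F y).card
        ≤ (F x).card + ((T.biUnion F).card + T.card.choose 2 * N) := by
          rw [Finset.sum_insert hx]
          exact Nat.add_le_add_left (ih (hT.mono (Set.subset_insert x _))) _
      _ = ((insert x T).biUnion F).card + (F x ∩ T.biUnion F).card + T.card.choose 2 * N := by
          rw [Finset.biUnion_insert, Finset.card_union_add_card_inter, add_assoc]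
      _ ≤ ((insert x T).biUnion F).card + (insert x T).card.choose 2 * N := by
          rw [Finset.card_insert_of_notMem hx, Nat.choose_succ_succ' T.card 1,
            Nat.choose_one_right, one_add_one_eq_two, add_mul]
          omega

theorem card_le_of_pairwise_card_inter_le [DecidableEq β] (F : ι → Finset β) {A : Finset β}
    {T : Finset ι} {m N : ℕ} (hN : m ^ 2 * (m + 1) * N < 2 * A.card) (hA : ∀ x ∈ T, F x ⊆ A)
    (hF : ∀ x ∈ T, A.card ≤ m * (F x).card)
    (hT : (T : Set ι).Pairwise fun x y => (F x ∩ F y).card ≤ N) : T.card ≤ m := by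
  by_contra! hcard
  obtain ⟨U, hUT, hU⟩ := Finset.exists_subset_card_eq (Nat.succ_le_of_lt hcard)
  rw [Nat.succ_eq_add_one] at hU
  have hunion : (U.biUnion F).card ≤ A.card :=
    Finset.card_le_card (Finset.biUnion_subset.2 fun x hx => hA x (hUT hx))
  have hchoose : 2 * (m + 1).choose 2 = (m + 1) * m := by
    rw [mul_comm, Nat.choose_two_right, ← Finset.sum_range_id, Finset.sum_range_id_mul_two,
      Nat.add_sub_cancel]
  have hsum : (m + 1) * A.card ≤ m * A.card + m * ((m + 1).choose 2 * N) :=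
    calc (m + 1) * A.card = ∑ _x ∈ U, A.card := by rw [Finset.sum_const, hU, smul_eq_mul]
      _ ≤ ∑ x ∈ U, m * (F x).card := Finset.sum_le_sum fun x hx => hF x (hUT hx)
      _ = m * ∑ x ∈ U, (F x).card := (Finset.mul_sum ..).symm
      _ ≤ m * ((U.biUnion F).card + (m + 1).choose 2 * N) := by
          rw [← hU]
          exact Nat.mul_le_mul_left m (sum_card_le_card_biUnion_add F U (hT.mono hUT))
      _ ≤ m * A.card + m * ((m + 1).choose 2 * N) := by
          rw [← mul_add]
          gcongr
  have : m * (2 * (m + 1).choose 2) * N = m ^ 2 * (m + 1) * N := by rw [hchoose]; ring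
  nlinarith

theorem exists_injOn_of_forall_card_le [Nonempty β] (S : Finset ι) (F : ι → Finset β)
    (hF : ∀ x ∈ S, S.card ≤ (F x).card) :
    ∃ g : ι → β, Set.InjOn g S ∧ ∀ x ∈ S, g x ∈ F x := by
  classical
  obtain ⟨g, hginj, hgF⟩ := (Finset.all_card_le_biUnion_card_iff_exists_injective
    fun x : S => F x).1 fun s => by
      obtain rfl | ⟨x, hx⟩ := s.eq_empty_or_nonempty
      · simp
      calc s.card ≤ S.card := by simpa using s.card_le_univ
        _ ≤ (F x).card := hF x x.2
        _ ≤ _ := Finset.card_le_card (Finset.subset_biUnion_of_mem (fun x : S => F x) hx)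
  refine ⟨fun x => if hx : x ∈ S then g ⟨x, hx⟩ else Classical.arbitrary β, ?_, fun x hx => ?_⟩
  · intro x hx y hy hxy
    simp only [Finset.mem_coe.1 hx, Finset.mem_coe.1 hy, dite_true] at hxy
    exact congrArg Subtype.val (hginj hxy)
  · simpa [hx] using hgF ⟨x, hx⟩

theorem IsCyclicPartition.exists_injOn_mem_inter [DecidableEq β] [Nonempty β] {R : V → V → Prop}
    {B : Finset V} {N : V → Finset β} {f : ι → List V}
    (hf : IsCyclicPartition (fun x y => R x y ∧ B.card ≤ (N x ∩ N y).card) B f) :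
    ∃ g : V → β, Set.InjOn g B ∧ (∀ x ∈ B, g x ∈ N x) ∧
      ∀ j, (f j : Cycle V).Chain fun x y => R x y ∧ g x ∈ N x ∩ N y := by
  obtain ⟨σ, hσ, hchain⟩ := hf.exists_next
  obtain ⟨g, hginj, hg⟩ := exists_injOn_of_forall_card_le B (fun x => N x ∩ N (σ x))
    fun x hx => (hσ x hx).2
  refine ⟨g, hginj, fun x hx => (Finset.mem_inter.1 (hg x hx)).1, fun j => (hchain j).imp ?_⟩
  rintro x _ ⟨hx, rfl⟩
  have hxB := (hf.mem_iff x).2 ⟨j, hx⟩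
  exact ⟨(hσ x hxB).1, hg x hxB⟩

theorem exists_isCyclicPartition_card_le_card_inter {κ : Type*} [Fintype κ] [DecidableEq β] {m : ℕ}
    (hm : 0 < m) {A : Finset β} {B : Finset V}
    (N : V → Finset β) (col : V → κ) (hN : ∀ x ∈ B, N x ⊆ A)
    (hcard : ∀ x ∈ B, A.card ≤ m * (N x).card) (hsize : m ^ 3 * B.card ≤ A.card) :
    ∃ f : Fin (m * Fintype.card κ) → List V,
      IsCyclicPartition (fun x y => col x = col y ∧ B.card ≤ (N x ∩ N y).card) B f := by
  classical
  have : Std.Symm fun x y => col x = col y ∧ B.card ≤ (N x ∩ N y).card :=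
    ⟨fun x y h => ⟨h.1.symm, Finset.inter_comm (N x) (N y) ▸ h.2⟩⟩
  refine exists_isCyclicPartition (fun x hx => ⟨rfl, ?_⟩) fun T hT hindep => ?_
  · rw [Finset.inter_self]
    have hlarge : m * (m ^ 2 * B.card) ≤ m * (N x).card :=
      calc m * (m ^ 2 * B.card) = m ^ 3 * B.card := by ring
        _ ≤ m * (N x).card := hsize.trans (hcard x hx)
    exact (Nat.le_mul_of_pos_left _ (by positivity)).trans (Nat.le_of_mul_le_mul_left hlarge hm)
  obtain rfl | ⟨b, hb⟩ := T.eq_empty_or_nonempty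
  · simp
  refine Finset.card_le_mul_card_image_of_maps_to (f := col) (by simp) m fun i _ => ?_
  obtain ⟨n, hn⟩ : ∃ n, B.card = n + 1 :=
    Nat.exists_eq_add_one.2 (Finset.card_pos.2 ⟨b, hT hb⟩)
  refine card_le_of_pairwise_card_inter_le (A := A) (N := n) N ?_ ?_ ?_ ?_
  · have : 0 < m ^ 3 := by positivity
    rw [hn] at hsize
    nlinarith
  · exact fun x hx => hN x (hT (Finset.mem_of_mem_filter x hx))
  · exact fun x hx => hcard x (hT (Finset.mem_of_mem_filter x hx))
  · intro x hx y hy hxy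
    simp only [Finset.coe_filter, Set.mem_ofPred_eq] at hx hy
    have := hindep hx.1 hy.1 hxy
    simp only [hx.2, hy.2, true_and, hn] at this
    omega

end Counting

section ColorNeighbors

variable {r : ℕ} {G : SimpleGraph V} {c : Sym2 V → Fin r} {A : Finset V} {i : Fin r} {a b : V}

open Classical in
/-- The neighbours of `b` in `A` along edges of colour `i`. -/
noncomputable def colorNbrs (G : SimpleGraph V) (c : Sym2 V → Fin r) (A : Finset V) (i : Fin r)
    (b : V) : Finset V :=
  {a ∈ A | (colorGraph G c i).Adj b a}

theorem mem_colorNbrs : a ∈ colorNbrs G c A i b ↔ a ∈ A ∧ (colorGraph G c i).Adj b a := by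
  simp [colorNbrs]

theorem exists_degIn_le_mul_card_colorNbrs (G : SimpleGraph V) (c : Sym2 V → Fin r)
    (A : Finset V) (b : V) : ∃ i, degIn G b A ≤ r * (colorNbrs G c A i b).card := by
  classical
  have hsum : degIn G b A = ∑ i, (colorNbrs G c A i b).card := by
    have hnbrs : G.neighborSet b ∩ A = ({a ∈ A | G.Adj b a} : Finset V) := by
      ext a
      simp [and_comm]
    rw [degIn, hnbrs, Set.ncard_coe_finset,
      Finset.card_eq_sum_card_fiberwise (f := fun a => c s(b, a)) (t := Finset.univ) (by simp)]
    refine Finset.sum_congr rfl fun i _ => congrArg Finset.card ?_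
    ext a
    simp [mem_colorNbrs, colorGraph, and_assoc]
  have : Nonempty (Fin r) := ⟨c s(b, b)⟩
  obtain ⟨i, -, hi⟩ := Finset.exists_le_of_sum_le (s := Finset.univ)
    (f := fun _ : Fin r => degIn G b A) (g := fun i => r * (colorNbrs G c A i b).card)
    Finset.univ_nonempty (by simp [← Finset.mul_sum, hsum])
  exact ⟨i, hi⟩

theorem IsCyclicPartition.exists_monochromatic_cover [DecidableEq V] [Nonempty V] {ι : Type*}
    {B : Finset V} (hdisj : Disjoint A B) {col : V → Fin r} {f : ι → List V}
    (hf : IsCyclicPartition (fun x y => col x = col y ∧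
      B.card ≤ (colorNbrs G c A (col x) x ∩ colorNbrs G c A (col y) y).card) B f) :
    ∃ F : ι → Set V, Pairwise (Function.onFun Disjoint F) ∧
      (∀ j, F j = ∅ ∨ IsMonoProperCycleOrEdge G c (F j)) ∧ ↑B ⊆ ⋃ j, F j := by
  obtain ⟨g, hginj, hg, hchain⟩ := hf.exists_injOn_mem_inter
  have hgB : ∀ x ∈ B, g x ∉ B := fun x hx =>
    Finset.disjoint_left.1 hdisj (mem_colorNbrs.1 (hg x hx)).1
  have hfB : ∀ j, ∀ x ∈ f j, x ∈ B := fun j x hx => (hf.mem_iff x).2 ⟨j, hx⟩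
  refine ⟨fun j => {x | x ∈ interleave g (f j)}, fun j k hjk => ?_, fun j => ?_, fun x hx => ?_⟩
  · exact Set.disjoint_left.2 fun _ hx hx' =>
      disjoint_interleave (S := B) hginj hgB (hfB j) (hfB k) (hf.disjoint hjk) hx hx'
  · refine (eq_or_ne (f j) []).imp (fun h => by simp [h, interleave]) fun hne => ?_
    refine isMonoProperCycleOrEdge_interleave (S := B) hginj hgB (hfB j) (hf.nodup j) hne
      (col := col) ((hchain j).imp fun x y h => ?_)
    have hxy := Finset.mem_inter.1 h.2
    exact ⟨h.1, (mem_colorNbrs.1 hxy.1).2, (mem_colorNbrs.1 hxy.2).2⟩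
  · obtain ⟨j, hj⟩ := (hf.mem_iff x).1 hx
    exact Set.mem_iUnion.2 ⟨j, mem_interleave.2 (Or.inl hj)⟩

end ColorNeighbors

theorem bipartite_cover_of_small_part_general {r k : ℕ} (hk : 0 < k) (G : SimpleGraph V)
    (c : Sym2 V → Fin r) {A B : Set V} (hA : A.Finite) (hB : B.Finite) (hdisj : Disjoint A B)
    (hsize : (k ^ 3 * r ^ 3 : ℝ) * (B.ncard : ℝ) ≤ (A.ncard : ℝ))
    (hdeg : ∀ v ∈ B, (A.ncard : ℝ) / k ≤ (degIn G v A : ℝ)) :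
    ∃ f : Fin (k * r ^ 2) → Set V, (∀ i j, i ≠ j → Disjoint (f i) (f j)) ∧
      (∀ i, f i = ∅ ∨ IsMonoProperCycleOrEdge G c (f i)) ∧ B ⊆ ⋃ i, f i := by
  classical
  lift A to Finset V using hA
  lift B to Finset V using hB
  simp only [Set.ncard_coe_finset, Finset.mem_coe, Finset.disjoint_coe] at hdisj hsize hdeg
  obtain rfl | ⟨b, -⟩ := B.eq_empty_or_nonempty
  · exact ⟨fun _ => ∅, by simp, by simp, by simp⟩
  have : Nonempty V := ⟨b⟩
  choose col hcol using exists_degIn_le_mul_card_colorNbrs G c A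
  have hcard : ∀ x ∈ B, A.card ≤ k * r * (colorNbrs G c A (col x) x).card := fun x hx => by
    have hdegx : A.card ≤ k * degIn G x A := by
      exact_mod_cast (div_le_iff₀' (by exact_mod_cast hk)).1 (hdeg x hx)
    exact hdegx.trans (mul_assoc k r _ ▸ Nat.mul_le_mul_left k (hcol x))
  obtain ⟨f, hf⟩ := exists_isCyclicPartition_card_le_card_inter (Nat.mul_pos hk (col b).pos)
    (fun x => colorNbrs G c A (col x) x) col (fun x _ => Finset.filter_subset _ _) hcard
    (by rw [mul_pow]; exact_mod_cast hsize)
  rw [show k * r ^ 2 = k * r * Fintype.card (Fin r) by rw [Fintype.card_fin]; ring]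
  obtain ⟨F, hFdisj, hF⟩ := hf.exists_monochromatic_cover hdisj
  exact ⟨F, fun _ _ hij => hFdisj hij, hF⟩

theorem bipartite_cover_of_small_part {W : Type} [Fintype W] (r : ℕ)
    (H : SimpleGraph W) (c : Sym2 W → Fin r) (A B : Set W)
    (hpart : A ∪ B = Set.univ) (hdisj : Disjoint A B)
    (hbip : ∀ u v : W, H.Adj u v → (u ∈ A ∧ v ∈ B) ∨ (u ∈ B ∧ v ∈ A))
    (hsize : (100 ^ 3 * r ^ 3 : ℝ) * (B.ncard : ℝ) ≤ (A.ncard : ℝ))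
    (hdeg : ∀ v ∈ B, (A.ncard : ℝ) / 100 ≤ (degIn H v A : ℝ)) :
    ∃ f : Fin (100 * r ^ 2) → Set W,
      (∀ i j : Fin (100 * r ^ 2), i ≠ j → Disjoint (f i) (f j)) ∧
      (∀ i, f i = ∅ ∨ IsMonoProperCycleOrEdge H c (f i)) ∧
      B ⊆ ⋃ i, f i := by
  exact bipartite_cover_of_small_part_general (k := 100) (by norm_num) H c A.toFinite B.toFinite
    hdisj (mod_cast hsize) (mod_cast hdeg)

end Paper
end

section
/- For every ε > 0 there exists n₀ such that for all n ≥ n₀, every properly edge-coloured graph G on n vertices with e(G) ≥ (1−ε²)·n²/2 has a rainbow matching of size at least (1−3ε)·n/2. -/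
/-!
STATEMENT 15: For every `ε > 0` there exists `n₀` such that for all `n ≥ n₀`, every
properly edge-coloured graph `G` on `n` vertices with `e(G) ≥ (1−ε²)·n²/2` has a
rainbow matching of size at least `(1−3ε)·n/2`.
-/

namespace Paper

variable {V : Type*} {C : Type*}

/-- The edge-colouring `c` is proper on `G`: edges sharing a vertex get distinct colours. -/
def ProperColoring (G : SimpleGraph V) (c : Sym2 V → C) : Prop :=
  ∀ u v w : V, G.Adj u v → G.Adj u w → v ≠ w → c s(u, v) ≠ c s(u, w)

/-- `G` has a rainbow matching of size `k` under the colouring `c`: `k` pairwise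
vertex-disjoint edges with pairwise distinct colours. -/
def HasRainbowMatching (G : SimpleGraph V) (c : Sym2 V → C) (k : ℕ) : Prop :=
  ∃ M : Finset (Sym2 V), M.card = k ∧ (∀ e ∈ M, e ∈ G.edgeSet) ∧
    (∀ e ∈ M, ∀ f ∈ M, e ≠ f → ∀ x : V, x ∈ e → x ∉ f) ∧
    (∀ e ∈ M, ∀ f ∈ M, e ≠ f → c e ≠ c f)

/-!
Let `M` be a rainbow matching of maximum size in a graph on `n` vertices, and let `U` be the set of
vertices it misses, so that `n = |U| + 2|M|`. Call an edge free if it joins `U` to a covered vertex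
and its colour does not occur in `M`. By maximality, an edge leaving `U` whose colour does not occur
in `M` is free, and properness allows at most `|M|` other edges at each vertex of `U`. If one end of
an edge of `M` is on three free edges, the other end is on none, since otherwise two disjoint free
edges of different colours could replace the edge of `M`. Hence, once `|U| ≥ 4`, each edge of `M`
accounts for at most `|U|` free edges, and the degrees in `U` add up to at most `2|U||M|`. Since the
degrees outside `U` add up to at most `2|M|n`, this gives `2e(G) ≤ 2|M|(|U| + n) = n² - |U|²`.
-/

open Finset

section RainbowMatching

variable {G : SimpleGraph V} {c : Sym2 V → C} {M N : Finset (Sym2 V)}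

/-- `M` is the edge set of a rainbow matching of `G` under the colouring `c`: the conditions of
`HasRainbowMatching` for a fixed `M`. -/
structure IsRainbowMatching (G : SimpleGraph V) (c : Sym2 V → C) (M : Finset (Sym2 V)) :
    Prop where
  subset_edgeSet : (M : Set (Sym2 V)) ⊆ G.edgeSet
  pairwiseDisjoint : (M : Set (Sym2 V)).PairwiseDisjoint ((↑) : Sym2 V → Set V)
  injOn : Set.InjOn c M

/-- A rainbow matching with the largest number of edges, so that no exchange can enlarge it. -/
structure IsMaximumRainbowMatching (G : SimpleGraph V) (c : Sym2 V → C) (M : Finset (Sym2 V)) :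
    Prop extends IsRainbowMatching G c M where
  card_le {N : Finset (Sym2 V)} : IsRainbowMatching G c N → #N ≤ #M

theorem exists_isMaximumRainbowMatching [Finite V] (G : SimpleGraph V) (c : Sym2 V → C) :
    ∃ M, IsMaximumRainbowMatching G c M := by
  obtain ⟨M, hM, hmax⟩ := Set.exists_max_image {M | IsRainbowMatching G c M} card (Set.toFinite _)
    ⟨∅, by simp, by simp, by simp⟩
  exact ⟨M, hM, hmax _⟩

namespace IsRainbowMatching

theorem hasRainbowMatching (hM : IsRainbowMatching G c M) : HasRainbowMatching G c #M :=
  ⟨M, rfl, fun _ he => hM.subset_edgeSet he,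
    fun _ he _ hf hne _ hxe hxf => Set.disjoint_left.1 (hM.pairwiseDisjoint he hf hne) hxe hxf,
    fun _ he _ hf hne => hM.injOn.ne he hf hne⟩

theorem mono (hM : IsRainbowMatching G c M) (h : N ⊆ M) : IsRainbowMatching G c N where
  subset_edgeSet := (coe_subset.2 h).trans hM.subset_edgeSet
  pairwiseDisjoint := hM.pairwiseDisjoint.subset (coe_subset.2 h)
  injOn := hM.injOn.mono (coe_subset.2 h)

end IsRainbowMatching

variable [DecidableEq V]

/-- The vertices covered by the edges in `M`. -/
def coveredVerts (M : Finset (Sym2 V)) : Finset V :=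
  M.biUnion Sym2.toFinset

theorem mem_coveredVerts {v : V} : v ∈ coveredVerts M ↔ ∃ e ∈ M, v ∈ e := by
  simp only [coveredVerts, mem_biUnion, Sym2.mem_toFinset]

theorem coveredVerts_mono (h : N ⊆ M) : coveredVerts N ⊆ coveredVerts M :=
  biUnion_subset_biUnion_of_subset_left _ h

theorem coveredVerts_insert (a b : V) (M : Finset (Sym2 V)) :
    coveredVerts (insert s(a, b) M) = {a, b} ∪ coveredVerts M := by
  rw [coveredVerts, biUnion_insert, Sym2.toFinset_mk_eq, coveredVerts]

namespace IsRainbowMatching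

theorem pairwiseDisjoint_toFinset (hM : IsRainbowMatching G c M) :
    (M : Set (Sym2 V)).PairwiseDisjoint Sym2.toFinset := fun e he f hf hne => by
  simpa only [Function.onFun, Finset.disjoint_left, Set.disjoint_left, Sym2.mem_toFinset,
    SetLike.mem_coe] using hM.pairwiseDisjoint he hf hne

theorem card_coveredVerts (hM : IsRainbowMatching G c M) : #(coveredVerts M) = 2 * #M := by
  rw [coveredVerts, card_biUnion hM.pairwiseDisjoint_toFinset, mul_comm]
  exact sum_const_nat fun e he =>
    Sym2.card_toFinset_of_not_isDiag e (G.not_isDiag_of_mem_edgeSet (hM.subset_edgeSet he))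

theorem notMem_coveredVerts_erase (hM : IsRainbowMatching G c M) {e : Sym2 V} (he : e ∈ M) {v : V}
    (hv : v ∈ e) : v ∉ coveredVerts (M.erase e) := by
  rw [mem_coveredVerts]
  rintro ⟨f, hf, hvf⟩
  obtain ⟨hne, hf⟩ := mem_erase.1 hf
  exact Set.disjoint_left.1 (hM.pairwiseDisjoint hf he hne) hvf hv

variable [DecidableEq C]

protected theorem insert (hM : IsRainbowMatching G c M) {a b : V} (hab : G.Adj a b)
    (ha : a ∉ coveredVerts M) (hb : b ∉ coveredVerts M) (hcol : c s(a, b) ∉ M.image c) :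
    IsRainbowMatching G c (insert s(a, b) M) where
  subset_edgeSet := by
    rw [coe_insert]
    exact Set.insert_subset hab hM.subset_edgeSet
  pairwiseDisjoint := by
    rw [coe_insert, Set.pairwiseDisjoint_insert]
    refine ⟨hM.pairwiseDisjoint, fun f hf _ => Set.disjoint_left.2 fun x hx hxf => ?_⟩
    have hxM : x ∈ coveredVerts M := mem_coveredVerts.2 ⟨f, hf, hxf⟩
    rcases Sym2.mem_iff.1 hx with rfl | rfl
    exacts [ha hxM, hb hxM]
  injOn := by
    rw [coe_insert, Set.injOn_insert fun h => hcol (mem_image_of_mem c h)]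
    exact ⟨hM.injOn, by rwa [← coe_image, mem_coe]⟩

/-- The exchange step: `s(x, y)` is replaced by `s(x, u)` and `s(y, w)`. -/
theorem exists_card_eq_add_one_of_exchange (hM : IsRainbowMatching G c M) {x y u w : V}
    (hxy : s(x, y) ∈ M) (hxu : G.Adj x u) (hyw : G.Adj y w) (hu : u ∉ coveredVerts M)
    (hw : w ∉ coveredVerts M) (hcu : c s(x, u) ∉ M.image c) (hcw : c s(y, w) ∉ M.image c)
    (huw : u ≠ w) (hcuw : c s(x, u) ≠ c s(y, w)) :
    ∃ N, IsRainbowMatching G c N ∧ #N = #M + 1 := by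
  set M' := M.erase s(x, y)
  have hM'M : M' ⊆ M := erase_subset _ _
  have hx : x ∈ coveredVerts M := mem_coveredVerts.2 ⟨_, hxy, Sym2.mem_mk_left x y⟩
  have hy : y ∈ coveredVerts M := mem_coveredVerts.2 ⟨_, hxy, Sym2.mem_mk_right x y⟩
  have hx' : x ∉ coveredVerts M' := hM.notMem_coveredVerts_erase hxy (Sym2.mem_mk_left x y)
  have hy' : y ∉ coveredVerts M' := hM.notMem_coveredVerts_erase hxy (Sym2.mem_mk_right x y)
  have hu' : u ∉ coveredVerts M' := fun h => hu (coveredVerts_mono hM'M h)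
  have hw' : w ∉ coveredVerts M' := fun h => hw (coveredVerts_mono hM'M h)
  have hcu' : c s(x, u) ∉ M'.image c := fun h => hcu (image_subset_image hM'M h)
  have hcw' : c s(y, w) ∉ M'.image c := fun h => hcw (image_subset_image hM'M h)
  have hne : y ≠ x := (G.ne_of_adj (hM.subset_edgeSet hxy)).symm
  have hyN : y ∉ coveredVerts (insert s(x, u) M') := by
    simp [coveredVerts_insert, hy', hne, ne_of_mem_of_not_mem hy hu]
  have hwN : w ∉ coveredVerts (insert s(x, u) M') := by
    simp [coveredVerts_insert, hw', huw.symm, (ne_of_mem_of_not_mem hx hw).symm]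
  have hcN : c s(y, w) ∉ (insert s(x, u) M').image c := by
    simpa only [image_insert, mem_insert, not_or] using ⟨hcuw.symm, hcw'⟩
  refine ⟨_, ((hM.mono hM'M).insert hxu hx' hu' hcu').insert hyw hyN hwN hcN, ?_⟩
  rw [card_insert_of_notMem fun h => hcN (mem_image_of_mem c h),
    card_insert_of_notMem fun h => hcu' (mem_image_of_mem c h), card_erase_add_one hxy]

end IsRainbowMatching

end RainbowMatching

section Counting

variable [Fintype V] {G : SimpleGraph V} {c : Sym2 V → C} {M : Finset (Sym2 V)}

theorem two_mul_ncard_edgeSet_le [DecidableEq V] [DecidableRel G.Adj] (U : Finset V) :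
    2 * G.edgeSet.ncard ≤ ∑ u ∈ U, G.degree u + #Uᶜ * Fintype.card V := by
  rw [← G.coe_edgeFinset, Set.ncard_coe_finset, ← G.sum_degrees_eq_twice_card_edges,
    ← sum_add_sum_compl U]
  exact Nat.add_le_add_left
    (sum_le_card_nsmul _ _ _ fun v _ => (G.degree_lt_card_verts v).le) _

theorem ProperColoring.card_filter_color_mem_le [DecidableRel G.Adj] [DecidableEq C]
    (hc : ProperColoring G c) (v : V) (S : Finset C) :
    #{u ∈ G.neighborFinset v | c s(v, u) ∈ S} ≤ #S := by
  refine card_le_card_of_injOn (fun u => c s(v, u)) (fun u hu => (mem_filter.1 hu).2)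
    fun u hu w hw huw => ?_
  simp only [coe_filter, SimpleGraph.mem_neighborFinset, Set.mem_ofPred_eq] at hu hw
  exact not_imp_not.1 (hc v u w hu.1 hw.1) huw

variable [DecidableEq V]

section FreeNeighbors

variable [DecidableRel G.Adj] [DecidableEq C]

/-- The uncovered neighbours of `v` that are joined to `v` by an edge whose colour does not occur
in `M`. These are the vertices available for an exchange at `v`. -/
def freeNeighbors (G : SimpleGraph V) [DecidableRel G.Adj] (c : Sym2 V → C) (M : Finset (Sym2 V))
    (v : V) : Finset V :=
  {u ∈ (coveredVerts M)ᶜ | G.Adj v u ∧ c s(v, u) ∉ M.image c}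

theorem mem_freeNeighbors {u v : V} : u ∈ freeNeighbors G c M v ↔
    u ∉ coveredVerts M ∧ G.Adj v u ∧ c s(v, u) ∉ M.image c := by
  rw [freeNeighbors, mem_filter, mem_compl]

theorem ProperColoring.exists_mem_freeNeighbors_ne (hc : ProperColoring G c) {v : V}
    (hv : 3 ≤ #(freeNeighbors G c M v)) (w : V) (k : C) :
    ∃ u ∈ freeNeighbors G c M v, u ≠ w ∧ c s(v, u) ≠ k := by
  have hfew : #(insert w {u ∈ G.neighborFinset v | c s(v, u) ∈ ({k} : Finset C)}) ≤ 2 :=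
    (card_insert_le _ _).trans (Nat.succ_le_succ (hc.card_filter_color_mem_le v {k}))
  obtain ⟨u, hu, hnot⟩ := exists_mem_notMem_of_card_lt_card (hfew.trans_lt hv)
  simp only [mem_insert, mem_filter, SimpleGraph.mem_neighborFinset, mem_singleton, not_or,
    not_and] at hnot
  exact ⟨u, hu, hnot.1, hnot.2 (mem_freeNeighbors.1 hu).2.1⟩

namespace IsMaximumRainbowMatching

theorem freeNeighbors_eq_empty_of_three_le (hM : IsMaximumRainbowMatching G c M)
    (hc : ProperColoring G c) {x y : V} (hxy : s(x, y) ∈ M) (hx : 3 ≤ #(freeNeighbors G c M x)) :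
    freeNeighbors G c M y = ∅ := by
  refine eq_empty_of_forall_notMem fun w hw => ?_
  obtain ⟨u, hu, huw, hcuw⟩ := hc.exists_mem_freeNeighbors_ne hx w (c s(y, w))
  rw [mem_freeNeighbors] at hu hw
  obtain ⟨N, hN, hcard⟩ := hM.exists_card_eq_add_one_of_exchange hxy hu.2.1 hw.2.1 hu.1 hw.1
    hu.2.2 hw.2.2 huw hcuw
  exact absurd (hM.card_le hN) (by omega)

theorem card_freeNeighbors_add_le (hM : IsMaximumRainbowMatching G c M) (hc : ProperColoring G c)
    (hU : 4 ≤ #(coveredVerts M)ᶜ) {x y : V} (hxy : s(x, y) ∈ M) :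
    #(freeNeighbors G c M x) + #(freeNeighbors G c M y) ≤ #(coveredVerts M)ᶜ := by
  have hle (v : V) : #(freeNeighbors G c M v) ≤ #(coveredVerts M)ᶜ := card_filter_le _ _
  by_cases hx : 3 ≤ #(freeNeighbors G c M x)
  · simpa only [hM.freeNeighbors_eq_empty_of_three_le hc hxy hx, card_empty, add_zero] using hle x
  by_cases hy : 3 ≤ #(freeNeighbors G c M y)
  · rw [Sym2.eq_swap] at hxy
    simpa only [hM.freeNeighbors_eq_empty_of_three_le hc hxy hy, card_empty, zero_add] using hle y
  omega

theorem sum_card_freeNeighbors_le (hM : IsMaximumRainbowMatching G c M) (hc : ProperColoring G c)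
    (hU : 4 ≤ #(coveredVerts M)ᶜ) :
    ∑ v ∈ coveredVerts M, #(freeNeighbors G c M v) ≤ #M * #(coveredVerts M)ᶜ := by
  rw [coveredVerts, sum_biUnion hM.pairwiseDisjoint_toFinset]
  refine sum_le_card_nsmul _ _ _ fun e he => ?_
  induction e using Sym2.ind with
  | _ x y =>
    rw [Sym2.toFinset_mk_eq, sum_pair (G.ne_of_adj (hM.subset_edgeSet he))]
    exact hM.card_freeNeighbors_add_le hc hU he

theorem degree_le_card_filter_add_card (hM : IsMaximumRainbowMatching G c M)
    (hc : ProperColoring G c) {u : V} (hu : u ∉ coveredVerts M) :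
    G.degree u ≤ #{v ∈ coveredVerts M | u ∈ freeNeighbors G c M v} + #M := by
  have hused : #{v ∈ G.neighborFinset u | c s(u, v) ∈ M.image c} ≤ #M :=
    (hc.card_filter_color_mem_le u _).trans card_image_le
  have hunused : {v ∈ G.neighborFinset u | c s(u, v) ∉ M.image c} ⊆
      {v ∈ coveredVerts M | u ∈ freeNeighbors G c M v} := by
    intro v hv
    obtain ⟨huv, hcol⟩ := mem_filter.1 hv
    rw [SimpleGraph.mem_neighborFinset] at huv
    refine mem_filter.2 ⟨?_, mem_freeNeighbors.2 ⟨hu, huv.symm, by rwa [Sym2.eq_swap]⟩⟩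
    by_contra hv
    have hlt : #M < #(insert s(u, v) M) :=
      card_lt_card (ssubset_insert fun h => hcol (mem_image_of_mem c h))
    exact hlt.not_ge (hM.card_le (hM.insert huv hu hv hcol))
  rw [← G.card_neighborFinset_eq_degree,
    ← card_filter_add_card_filter_not (fun v => c s(u, v) ∈ M.image c), add_comm]
  exact Nat.add_le_add (card_le_card hunused) hused

end IsMaximumRainbowMatching

end FreeNeighbors

namespace IsMaximumRainbowMatching

theorem sum_degree_compl_coveredVerts_le [DecidableRel G.Adj] (hM : IsMaximumRainbowMatching G c M)
    (hc : ProperColoring G c) (hU : 4 ≤ #(coveredVerts M)ᶜ) :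
    ∑ u ∈ (coveredVerts M)ᶜ, G.degree u ≤ 2 * #M * #(coveredVerts M)ᶜ := by
  classical
  have hdouble : ∑ u ∈ (coveredVerts M)ᶜ, #{v ∈ coveredVerts M | u ∈ freeNeighbors G c M v} =
      ∑ v ∈ coveredVerts M, #(freeNeighbors G c M v) := by
    refine (sum_card_bipartiteAbove_eq_sum_card_bipartiteBelow
      fun u v => u ∈ freeNeighbors G c M v).trans (sum_congr rfl fun v _ => congrArg card ?_)
    exact filter_mem_eq_inter.trans (inter_eq_right.2 (filter_subset _ _))
  calc ∑ u ∈ (coveredVerts M)ᶜ, G.degree u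
      ≤ ∑ u ∈ (coveredVerts M)ᶜ, (#{v ∈ coveredVerts M | u ∈ freeNeighbors G c M v} + #M) :=
        sum_le_sum fun u hu => hM.degree_le_card_filter_add_card hc (mem_compl.1 hu)
    _ = ∑ v ∈ coveredVerts M, #(freeNeighbors G c M v) + #(coveredVerts M)ᶜ * #M := by
        rw [sum_add_distrib, hdouble, sum_const, smul_eq_mul]
    _ ≤ #M * #(coveredVerts M)ᶜ + #(coveredVerts M)ᶜ * #M :=
        Nat.add_le_add_right (hM.sum_card_freeNeighbors_le hc hU) _
    _ = 2 * #M * #(coveredVerts M)ᶜ := by ring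

theorem card_compl_coveredVerts_sq_add_le (hM : IsMaximumRainbowMatching G c M)
    (hc : ProperColoring G c) (hU : 4 ≤ #(coveredVerts M)ᶜ) :
    #(coveredVerts M)ᶜ ^ 2 + 2 * G.edgeSet.ncard ≤ Fintype.card V ^ 2 := by
  classical
  have hedges := two_mul_ncard_edgeSet_le (G := G) (coveredVerts M)ᶜ
  have hdegree := hM.sum_degree_compl_coveredVerts_le hc hU
  have hcard := card_add_card_compl (coveredVerts M)
  rw [compl_compl] at hedges
  rw [hM.card_coveredVerts] at hedges hcard
  rw [← hcard] at hedges ⊢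
  linarith

end IsMaximumRainbowMatching

end Counting

theorem rainbow_matching_of_many_edges_general [Fintype V] {G : SimpleGraph V} {c : Sym2 V → C}
    (hc : ProperColoring G c) {ε : ℝ} (hε : 3 ≤ ε * Fintype.card V)
    (hG : (1 - ε ^ 2) * (Fintype.card V : ℝ) ^ 2 / 2 ≤ G.edgeSet.ncard) :
    ∃ k : ℕ, (1 - ε) * (Fintype.card V : ℝ) / 2 ≤ k ∧ HasRainbowMatching G c k := by
  classical
  obtain ⟨M, hM⟩ := exists_isMaximumRainbowMatching G c
  refine ⟨#M, ?_, hM.hasRainbowMatching⟩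
  have hcard : (2 * #M + #(coveredVerts M)ᶜ : ℝ) = Fintype.card V := by
    exact_mod_cast hM.card_coveredVerts ▸ card_add_card_compl (coveredVerts M)
  suffices hU : (#(coveredVerts M)ᶜ : ℝ) ≤ ε * Fintype.card V by linarith
  rcases Nat.lt_or_ge #(coveredVerts M)ᶜ 4 with hsmall | hlarge
  · exact le_trans (by exact_mod_cast Nat.le_of_lt_succ hsmall) hε
  · have hcount : (#(coveredVerts M)ᶜ ^ 2 + 2 * G.edgeSet.ncard : ℝ) ≤ Fintype.card V ^ 2 := by
      exact_mod_cast hM.card_compl_coveredVerts_sq_add_le hc hlarge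
    exact le_of_sq_le_sq (by linarith) (by linarith)

theorem rainbow_matching_of_many_edges (ε : ℝ) (hε : 0 < ε) :
    ∃ n₀ : ℕ, ∀ n : ℕ, n₀ ≤ n →
      ∀ (W : Type) [Fintype W], ∀ (D : Type) (G : SimpleGraph W) (c : Sym2 W → D),
        Fintype.card W = n → ProperColoring G c →
        (1 - ε ^ 2) * (n : ℝ) ^ 2 / 2 ≤ (G.edgeSet.ncard : ℝ) →
        ∃ k : ℕ, (1 - 3 * ε) * (n : ℝ) / 2 ≤ (k : ℝ) ∧ HasRainbowMatching G c k := by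
  refine ⟨⌈3 / ε⌉₊, fun n hn W _ D G c hW hc hG => ?_⟩
  subst hW
  have hlarge : 3 ≤ ε * Fintype.card W := (div_le_iff₀' hε).1 (Nat.ceil_le.1 hn)
  obtain ⟨k, hk, hmatching⟩ := rainbow_matching_of_many_edges_general hc hlarge hG
  exact ⟨k, by linarith, hmatching⟩

end Paper
end
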